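/- arXiv:2411.03854 — 7 statements merged into one kernel-verified Lean document; each statement's English description precedes it below -/
import Mathlib

section
/- Let δ = 1/(M²·φ(M)) where φ is Euler's totient function. Suppose A ⊕ B = ℤ_M is a tiling and let H = { ξ ∈ ℤ_M : 1̂_A(ξ) ≠ 0 } (the support of |1̂_A|²), with standard complement H′ = (ℤ_M ∖ H) ∪ {0}. Then D^{δ+}(H) = D^+(H) = D^−(H) = k_H = |B|, and D^+(H′) = D^−(H′) = k_{H′} = |A|. -/
/-!
The sums `expSum C ξ = 1̂_C(ξ)` control everything. For a tiling `A ⊕ B = ℤ_M` they satisfy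
`1̂_A · 1̂_B = M · 1_{0}`, so `1̂_B` vanishes on `H ∖ {0}` and `1̂_A` vanishes on `H' ∖ {0}`.

* Upper bounds (`sum_le_card`): if `1̂_C` vanishes on `S ∖ {0}` and `h` is feasible for `D^-(S)`,
  then `∑ h(z) |1̂_C(z)|²` is at most its term `|C|²` at `z = 0`, while by Plancherel it equals
  `∑_{c,c'} ĥ(c - c') ≥ |C| ĥ(0)`. Hence `∑ h ≤ |C|`. Take `C = B` for `H`, `C = A` for `H'`.
* Lower bounds (`exists_feasible`): the average of `z ↦ |1̂_C(uz)|² / |C|²` over the units `u` is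
  a positive definite step function of sum `M / |C|`, supported where `1̂_C ≠ 0`. Its values are
  integers divided by `φ(M) |C|²`, because Ramanujan sums are integers, so they are at least `δ`
  on the support. Take `C = A` for `H`, `C = B` for `H'`.
* The numbers `k_H` (`kH_eq_card`): `1̂_C` vanishes at `M / s` exactly when `Φ_s` divides the mask
  polynomial of `C`, and `Φ_s(1)` is the prime below the prime power `s`. Hence `k_{H'} ∣ |A|` and
  `k_H ∣ |B|`, while `k_H k_{H'}` is the product of these primes over all prime powers `s ∣ M`,
  which is `M = |A||B|`.

All sets involved are unions of step classes: the elements of a step class differ by units of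
`ℤ_M`, and replacing `ξ` by `uξ` conjugates `1̂_C(ξ)` over `ℚ`.
-/


open Finset

noncomputable def fhat (M : ℕ) [NeZero M] (f : ZMod M → ℝ) (ξ : ZMod M) : ℂ :=
  ∑ z : ZMod M, (f z : ℂ) *
    Complex.exp (-2 * Real.pi * Complex.I * ((z.val : ℂ) * (ξ.val : ℂ)) / (M : ℂ))

noncomputable def conv (M : ℕ) [NeZero M] (f g : ZMod M → ℝ) (x : ZMod M) : ℝ :=
  ∑ y : ZMod M, f y * g (x - y)

def IsStepFun (M : ℕ) [NeZero M] (f : ZMod M → ℝ) : Prop :=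
  ∀ z w : ZMod M, Nat.gcd z.val M = Nat.gcd w.val M → f z = f w

/-- `Φ_d | F` : the Fourier transform of `f` vanishes on the step class `R_{M/d}`. -/
def cycDvd (M : ℕ) [NeZero M] (f : ZMod M → ℝ) (d : ℕ) : Prop :=
  ∀ ξ : ZMod M, Nat.gcd ξ.val M = M / d → fhat M f ξ = 0

open scoped Classical in
noncomputable def SF (M : ℕ) [NeZero M] (f : ZMod M → ℝ) : Finset ℕ :=
  M.divisors.filter (fun s => IsPrimePow s ∧ cycDvd M f s)

noncomputable def satT1 (M : ℕ) [NeZero M] (f : ZMod M → ℝ) : Prop :=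
  ∑ z : ZMod M, f z = ∏ s ∈ SF M f, (s.minFac : ℝ)

def satT2 (M : ℕ) [NeZero M] (f : ZMod M → ℝ) : Prop :=
  ∀ S : Finset ℕ, S.Nonempty → S ⊆ SF M f →
    (∀ s ∈ S, ∀ t ∈ S, s ≠ t → s.minFac ≠ t.minFac) →
    cycDvd M f (∏ s ∈ S, s)

def IsTiling (M : ℕ) [NeZero M] (A B : Finset (ZMod M)) : Prop :=
  ∀ z : ZMod M, ∃! ab : ZMod M × ZMod M, ab.1 ∈ A ∧ ab.2 ∈ B ∧ ab.1 + ab.2 = z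

/-- `H` is a union of step classes. -/
def IsStepSet (M : ℕ) [NeZero M] (H : Set (ZMod M)) : Prop :=
  ∀ z w : ZMod M, Nat.gcd z.val M = Nat.gcd w.val M → (z ∈ H ↔ w ∈ H)

def divStar (M : ℕ) [NeZero M] (A : Finset (ZMod M)) : Set (ZMod M) :=
  {z | ∃ a ∈ A, ∃ a' ∈ A, Nat.gcd z.val M = Nat.gcd (a - a').val M}

noncomputable def cliqueNum (M : ℕ) [NeZero M] (H : Set (ZMod M)) : ℕ :=
  sSup {n | ∃ C : Finset (ZMod M), (∀ x ∈ C, ∀ y ∈ C, x - y ∈ H) ∧ C.card = n}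

noncomputable def Dplus (M : ℕ) [NeZero M] (H : Set (ZMod M)) : ℝ :=
  sSup {t : ℝ | ∃ h : ZMod M → ℝ, IsStepFun M h ∧ h 0 = 1 ∧
    (∀ ξ, (fhat M h ξ).im = 0 ∧ 0 ≤ (fhat M h ξ).re) ∧
    (∀ z ∈ H, 0 ≤ h z) ∧ (∀ z ∉ H, h z = 0) ∧ t = ∑ z : ZMod M, h z}

noncomputable def Dminus (M : ℕ) [NeZero M] (H : Set (ZMod M)) : ℝ :=
  sSup {t : ℝ | ∃ h : ZMod M → ℝ, IsStepFun M h ∧ h 0 = 1 ∧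
    (∀ ξ, (fhat M h ξ).im = 0 ∧ 0 ≤ (fhat M h ξ).re) ∧
    (∀ z ∉ H, h z ≤ 0) ∧ t = ∑ z : ZMod M, h z}

noncomputable def Ddelta (M : ℕ) [NeZero M] (δ : ℝ) (H : Set (ZMod M)) : ℝ :=
  sSup {t : ℝ | ∃ h : ZMod M → ℝ, IsStepFun M h ∧ h 0 = 1 ∧
    (∀ ξ, (fhat M h ξ).im = 0 ∧ 0 ≤ (fhat M h ξ).re) ∧
    (∀ z ∈ H, δ ≤ h z) ∧ (∀ z ∉ H, h z = 0) ∧ t = ∑ z : ZMod M, h z}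

open scoped Classical in
noncomputable def SH (M : ℕ) [NeZero M] (H : Set (ZMod M)) : Finset ℕ :=
  M.divisors.filter (fun s => IsPrimePow s ∧ ∀ ξ : ZMod M, Nat.gcd ξ.val M = M / s → ξ ∈ H)

noncomputable def kH (M : ℕ) [NeZero M] (H : Set (ZMod M)) : ℕ :=
  ∏ s ∈ SH M H, s.minFac

def cubVertex (M : ℕ) [NeZero M] {K : ℕ} (p : Fin K → ℕ) (c : ZMod M)
    (ρ : Fin K → ℕ) (S : Finset (Fin K)) : ZMod M :=
  c + ∑ i ∈ S, ((ρ i * (M / p i) : ℕ) : ZMod M)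

noncomputable def cubEval (M : ℕ) [NeZero M] {K : ℕ} (p : Fin K → ℕ) (c : ZMod M)
    (ρ : Fin K → ℕ) (f : ZMod M → ℝ) : ℝ :=
  ∑ S : Finset (Fin K), (-1 : ℝ) ^ S.card * f (cubVertex M p c ρ S)

noncomputable def hAfun (M : ℕ) [NeZero M] (A : Finset (ZMod M)) (z : ZMod M) : ℝ :=
  (1 / ((A.card : ℝ) * (Nat.totient M : ℝ))) *
    ∑ r ∈ Finset.univ.filter (fun r : ZMod M => Nat.gcd r.val M = 1),
      conv M (fun x => if x ∈ A.image (fun a => r * a) then (1 : ℝ) else 0)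
             (fun x => if x ∈ A.image (fun a => -(r * a)) then (1 : ℝ) else 0) z

noncomputable def fN (M : ℕ) [NeZero M] (f : ZMod M → ℝ) (N : ℕ) (z : ZMod N) : ℝ :=
  ∑ y ∈ Finset.univ.filter (fun y : ZMod M => ((y.val : ℕ) : ZMod N) = z), f y

open ZMod Polynomial

/-! ### Exponential sums over subsets -/

/-- The exponential sum `∑_{c ∈ C} e(-cξ/M)`, that is, the Fourier transform of `1_C` at `ξ`,
written with Mathlib's standard additive character. -/
noncomputable def expSum {M : ℕ} [NeZero M] (C : Finset (ZMod M)) (ξ : ZMod M) : ℂ :=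
  ∑ c ∈ C, stdAddChar (-(c * ξ))

lemma fhat_eq_sum_stdAddChar {M : ℕ} [NeZero M] (f : ZMod M → ℝ) (ξ : ZMod M) :
    fhat M f ξ = ∑ z : ZMod M, (f z : ℂ) * stdAddChar (-(z * ξ)) := by
  unfold fhat
  refine Finset.sum_congr rfl fun z _ => ?_
  have h := stdAddChar_coe (N := M) (-((z.val : ℤ) * (ξ.val : ℤ)))
  push_cast at h
  rw [natCast_zmod_val, natCast_zmod_val] at h
  rw [h]
  congr 2
  ring

lemma fhat_indicator {M : ℕ} [NeZero M] (C : Finset (ZMod M)) (ξ : ZMod M) :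
    fhat M (fun z => if z ∈ C then (1 : ℝ) else 0) ξ = expSum C ξ := by
  rw [fhat_eq_sum_stdAddChar, expSum]
  simp [apply_ite, Finset.sum_ite_mem]

lemma sum_eq_fhat_zero {M : ℕ} [NeZero M] (h : ZMod M → ℝ) :
    ((∑ z, h z : ℝ) : ℂ) = fhat M h 0 := by
  simp [fhat_eq_sum_stdAddChar]

lemma expSum_zero {M : ℕ} [NeZero M] (C : Finset (ZMod M)) : expSum C 0 = C.card := by
  simp [expSum]

lemma sum_stdAddChar_mul {M : ℕ} [NeZero M] (k : ZMod M) :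
    ∑ z : ZMod M, stdAddChar (z * k) = if k = 0 then (M : ℂ) else 0 := by
  rw [AddChar.sum_mulShift k (isPrimitive_stdAddChar M)]
  simp [ZMod.card]

lemma normSq_expSum {M : ℕ} [NeZero M] (C : Finset (ZMod M)) (ξ : ZMod M) :
    ((Complex.normSq (expSum C ξ) : ℝ) : ℂ) =
      ∑ c ∈ C, ∑ c' ∈ C, stdAddChar (ξ * (c' - c)) := by
  rw [← Complex.mul_conj]
  simp only [expSum, map_sum, Finset.sum_mul_sum, ← AddChar.map_neg_eq_conj,
    ← AddChar.map_add_eq_mul]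
  refine Finset.sum_congr rfl fun c _ => Finset.sum_congr rfl fun c' _ => ?_
  congr 1
  ring

/-! ### The exponential sum as a polynomial value at a root of unity -/

/-- The mask polynomial `∑_{c ∈ C} X^c` of `C`, with exponents in `{0, …, M - 1}`. -/
noncomputable def maskPoly {M : ℕ} [NeZero M] (C : Finset (ZMod M)) : ℤ[X] :=
  ∑ c ∈ C, X ^ c.val

lemma aeval_maskPoly {M : ℕ} [NeZero M] (C : Finset (ZMod M)) (z : ZMod M) :
    aeval (stdAddChar (-z) : ℂ) (maskPoly C) = expSum C z := by
  simp only [maskPoly, expSum, map_sum, map_pow, aeval_X]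
  refine Finset.sum_congr rfl fun c _ => ?_
  rw [← AddChar.map_nsmul_eq_pow, nsmul_eq_mul, natCast_zmod_val]
  congr 1
  ring

/-- Multiplication of the frequency by a unit is a Galois conjugation, so it preserves zeros. -/
lemma expSum_unit_mul_eq_zero {M : ℕ} [NeZero M] (C : Finset (ZMod M)) (u : (ZMod M)ˣ)
    {z : ZMod M} (hz : expSum C z = 0) : expSum C (u * z) = 0 := by
  set ζ : ℂ := stdAddChar (-z) with hζ
  have hM : ζ ^ M = 1 := by
    rw [hζ, ← AddChar.map_nsmul_eq_pow]; simp
  have hprim : IsPrimitiveRoot ζ (orderOf ζ) := IsPrimitiveRoot.orderOf ζ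
  have hcop : Nat.Coprime (u : ZMod M).val (orderOf ζ) :=
    (ZMod.val_coe_unit_coprime u).coprime_dvd_right (orderOf_dvd_of_pow_eq_one hM)
  have hpos : 0 < orderOf ζ := Nat.pos_of_dvd_of_pos (orderOf_dvd_of_pow_eq_one hM)
    (NeZero.pos M)
  have hpow : (stdAddChar (-((u : ZMod M) * z)) : ℂ) = ζ ^ (u : ZMod M).val := by
    rw [hζ, ← AddChar.map_nsmul_eq_pow, nsmul_eq_mul, natCast_zmod_val]
    congr 1
    ring
  rw [← aeval_maskPoly, ← hζ] at hz
  rw [← aeval_maskPoly, hpow]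
  have hdvd := minpoly.isIntegrallyClosed_dvd (hprim.isIntegral hpos) hz
  rw [hprim.minpoly_eq_pow_coprime hcop] at hdvd
  obtain ⟨q, hq⟩ := hdvd
  rw [hq, map_mul, minpoly.aeval, zero_mul]

/-- Elements of the same step class differ by a unit. -/
lemma exists_unit_mul_of_gcd_eq {M : ℕ} [NeZero M] {z w : ZMod M}
    (h : Nat.gcd z.val M = Nat.gcd w.val M) : ∃ u : (ZMod M)ˣ, w = u * z := by
  have key : ∀ x : ZMod M, ∃ v : (ZMod M)ˣ, x = v * ((Nat.gcd x.val M : ℕ) : ZMod M) := by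
    intro x
    obtain ⟨d, hd, v, hv, hx⟩ := x.eq_unit_mul_divisor
    obtain ⟨v, rfl⟩ := hv
    refine ⟨v, ?_⟩
    have hg : Nat.gcd x.val M = d := by
      have h1 : x = (((v : ZMod M).val * d : ℕ) : ZMod M) := by
        rw [Nat.cast_mul, natCast_zmod_val, ← hx]
      rw [h1, ZMod.val_natCast, ← Nat.gcd_rec, Nat.gcd_comm,
        (ZMod.val_coe_unit_coprime v).gcd_mul_left_cancel]
      exact Nat.gcd_eq_left hd
    rw [hg]
    exact hx
  obtain ⟨v, hv⟩ := key z
  obtain ⟨v', hv'⟩ := key w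
  refine ⟨v' * v⁻¹, ?_⟩
  rw [← h] at hv'
  generalize ((Nat.gcd z.val M : ℕ) : ZMod M) = g at hv hv'
  rw [hv, hv', Units.val_mul, mul_assoc, Units.inv_mul_cancel_left]

/-- The zero set of the Fourier transform of `1_C` is a union of step classes. -/
lemma expSum_eq_zero_iff_of_gcd_eq {M : ℕ} [NeZero M] (C : Finset (ZMod M)) {z w : ZMod M}
    (h : Nat.gcd z.val M = Nat.gcd w.val M) : expSum C z = 0 ↔ expSum C w = 0 := by
  constructor
  · obtain ⟨u, rfl⟩ := exists_unit_mul_of_gcd_eq h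
    exact expSum_unit_mul_eq_zero C u
  · obtain ⟨u, rfl⟩ := exists_unit_mul_of_gcd_eq h.symm
    exact expSum_unit_mul_eq_zero C u

/-- If the Fourier transform of `1_C` vanishes on `R_{M/s}` for all prime powers `s ∈ S`, then
the polynomial `∏_{s ∈ S} Φ_s` divides the mask polynomial of `C`; evaluating at `1` gives the
claim. -/
lemma prod_minFac_dvd_card {M : ℕ} [NeZero M] (C : Finset (ZMod M)) (S : Finset ℕ)
    (hS : ∀ s ∈ S, s ∣ M ∧ IsPrimePow s ∧ expSum C ((M / s : ℕ) : ZMod M) = 0) :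
    ∏ s ∈ S, s.minFac ∣ C.card := by
  have hpos : ∀ s ∈ S, 0 < s := fun s hs => (hS s hs).2.1.pos
  have hdvd : ∏ s ∈ S, cyclotomic s ℤ ∣ maskPoly C := by
    refine Finset.prod_dvd_of_isRelPrime ?_ ?_
    · intro s hs t ht hst
      have hs' := cyclotomic.irreducible (hpos s hs)
      have ht' := cyclotomic.irreducible (hpos t ht)
      refine hs'.isRelPrime_iff_not_dvd.2 fun hd => hst ?_
      exact cyclotomic_injective (R := ℤ) (eq_of_monic_of_associated (cyclotomic.monic s ℤ)
        (cyclotomic.monic t ℤ) (hs'.associated_of_dvd ht' hd))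
    · intro s hs
      obtain ⟨hsM, -, h0⟩ := hS s hs
      have hprim : IsPrimitiveRoot (stdAddChar (-((M / s : ℕ) : ZMod M)) : ℂ) s := by
        have h1 : (stdAddChar (-((M / s : ℕ) : ZMod M)) : ℂ) =
            (Complex.exp (2 * Real.pi * Complex.I / s))⁻¹ := by
          rw [AddChar.map_neg_eq_inv]
          have := stdAddChar_coe (N := M) ((M / s : ℕ) : ℤ)
          rw [Int.cast_natCast] at this
          rw [this]
          congr 2
          have hM : (M : ℂ) ≠ 0 := Nat.cast_ne_zero.2 (NeZero.ne M)
          have hs0 : (s : ℂ) ≠ 0 := Nat.cast_ne_zero.2 (hpos s hs).ne'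
          rw [Int.cast_natCast, Nat.cast_div hsM hs0]
          field_simp
        rw [h1]
        exact (Complex.isPrimitiveRoot_exp s (hpos s hs).ne').inv
      rw [cyclotomic_eq_minpoly hprim (hpos s hs)]
      refine minpoly.isIntegrallyClosed_dvd (hprim.isIntegral (hpos s hs)) ?_
      rw [aeval_maskPoly, h0]
  have h1 := _root_.map_dvd (evalRingHom (1 : ℤ)) hdvd
  rw [map_prod] at h1
  have h2 : ∀ s ∈ S, evalRingHom (1 : ℤ) (cyclotomic s ℤ) = (s.minFac : ℤ) := by
    intro s hs
    obtain ⟨p, k, hp, hk, rfl⟩ := (isPrimePow_nat_iff s).1 (hS s hs).2.1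
    have := Fact.mk hp
    obtain ⟨k, rfl⟩ : ∃ j, k = j + 1 := ⟨k - 1, by omega⟩
    rw [coe_evalRingHom, eval_one_cyclotomic_prime_pow, hp.pow_minFac hk.ne']
  rw [Finset.prod_congr rfl h2] at h1
  have h3 : evalRingHom (1 : ℤ) (maskPoly C) = (C.card : ℤ) := by
    simp [maskPoly]
  rw [h3, ← Nat.cast_prod] at h1
  exact_mod_cast h1

/-- The exponential form of `∑_{d ∣ M} Λ(d) = log M`. -/
lemma prod_minFac_primePow_divisors (M : ℕ) (hM : M ≠ 0) :
    ∏ s ∈ M.divisors with IsPrimePow s, s.minFac = M := by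
  have h := ArithmeticFunction.vonMangoldt_sum (n := M)
  simp only [ArithmeticFunction.vonMangoldt_apply, ← Finset.sum_filter] at h
  have hpos : ∀ s ∈ M.divisors.filter IsPrimePow, (0 : ℝ) < s.minFac := fun s _ => by
    exact_mod_cast s.minFac_pos
  rw [← Real.log_prod (fun s hs => (hpos s hs).ne')] at h
  have hexp := Real.log_injOn_pos (Set.mem_Ioi.2 (Finset.prod_pos hpos))
    (Set.mem_Ioi.2 (by positivity : (0 : ℝ) < M)) h
  exact_mod_cast hexp

/-! ### Integrality of the averaged power spectrum -/

/-- A generalized Ramanujan sum: the values of a character at the elements of given order sum to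
an integer. The sum over all elements killed by `n` is `0` or the number of those elements, and
it splits according to the order of the element. -/
lemma exists_int_sum_addOrderOf {G : Type*} [AddCommGroup G] [Fintype G] [DecidableEq G]
    (ψ : AddChar G ℂ) (n : ℕ) (hn : 0 < n) :
    ∃ k : ℤ, ∑ r : G with addOrderOf r = n, ψ r = k := by
  induction n using Nat.strong_induction_on with
  | _ n ih =>
    obtain ⟨a, ha⟩ : ∃ k : ℤ, ∑ r : G with n • r = 0, ψ r = k := by
      by_cases h : ∀ s : G, n • s = 0 → ψ s = 1
      · refine ⟨(Finset.univ.filter fun r : G => n • r = 0).card, ?_⟩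
        rw [Finset.sum_congr rfl fun r hr => h r (Finset.mem_filter.1 hr).2]
        simp
      · push Not at h
        obtain ⟨s, hs, hs1⟩ := h
        refine ⟨0, ?_⟩
        have : ψ s * ∑ r : G with n • r = 0, ψ r = ∑ r : G with n • r = 0, ψ r := by
          rw [Finset.mul_sum]
          refine Finset.sum_bij' (fun r _ => s + r) (fun r _ => r - s) ?_ ?_ ?_ ?_ ?_
          · intro r hr
            simpa [smul_add, hs] using hr
          · intro r hr
            simpa [smul_sub, hs] using hr
          · intro r _; simp
          · intro r _; simp
          · intro r _; rw [AddChar.map_add_eq_mul]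
        have h2 : (ψ s - 1) * ∑ r : G with n • r = 0, ψ r = 0 := by rw [sub_mul, this]; ring
        simpa [sub_eq_zero, hs1] using h2
    have hsplit : ∑ r : G with n • r = 0, ψ r =
        ∑ d ∈ n.divisors, ∑ r : G with addOrderOf r = d, ψ r := by
      rw [← Finset.sum_fiberwise_of_maps_to (g := addOrderOf) (t := n.divisors)]
      · refine Finset.sum_congr rfl fun d hd => ?_
        rw [Finset.filter_filter]
        refine Finset.sum_congr (Finset.filter_congr fun r _ => ?_) fun _ _ => rfl
        constructor
        · exact fun h => h.2
        · rintro rfl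
          exact ⟨addOrderOf_dvd_iff_nsmul_eq_zero.1 (Nat.dvd_of_mem_divisors hd), rfl⟩
      · intro r hr
        exact Nat.mem_divisors.2
          ⟨addOrderOf_dvd_iff_nsmul_eq_zero.2 (Finset.mem_filter.1 hr).2, hn.ne'⟩
    rw [← Nat.cons_self_properDivisors hn.ne', Finset.sum_cons, ha] at hsplit
    have hb : ∀ d ∈ n.properDivisors, ∃ k : ℤ, ∑ r : G with addOrderOf r = d, ψ r = k :=
      fun d hd => ih d (Nat.mem_properDivisors.1 hd).2
        (Nat.pos_of_mem_properDivisors hd)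
    choose! f hf using hb
    rw [Finset.sum_congr rfl hf] at hsplit
    refine ⟨a - ∑ d ∈ n.properDivisors, f d, ?_⟩
    push_cast
    rw [hsplit]
    ring

lemma exists_int_sum_units {M : ℕ} [NeZero M] (k : ZMod M) :
    ∃ m : ℤ, ∑ u : (ZMod M)ˣ, (stdAddChar ((u : ZMod M) * k) : ℂ) = m := by
  obtain ⟨m, hm⟩ := exists_int_sum_addOrderOf ((stdAddChar (N := M)).mulShift k) M (NeZero.pos M)
  refine ⟨m, ?_⟩
  rw [← hm]
  have hunit : ∀ r : ZMod M, addOrderOf r = M ↔ IsUnit r := by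
    intro r
    conv_lhs => rw [← natCast_zmod_val r, ZMod.addOrderOf_coe _ (NeZero.ne M)]
    have h := ZMod.isUnit_iff_coprime r.val M
    rw [natCast_zmod_val] at h
    rw [h, Nat.div_eq_self, Nat.coprime_comm]
    simp [NeZero.ne M, Nat.Coprime]
  refine Finset.sum_bij (fun u _ => (u : ZMod M)) ?_ ?_ ?_ ?_
  · intro u _
    exact Finset.mem_filter.2 ⟨Finset.mem_univ _, (hunit _).2 u.isUnit⟩
  · intro u _ v _ h
    exact Units.ext h
  · intro r hr
    obtain ⟨u, hu⟩ := (hunit r).1 (Finset.mem_filter.1 hr).2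
    exact ⟨u, Finset.mem_univ _, hu⟩
  · intro u _
    rw [AddChar.mulShift_apply, mul_comm]

/-- The averaged power spectrum before normalization, `∑_u |1̂_C(uz)|²` over the units `u`. -/
noncomputable def unitPower {M : ℕ} [NeZero M] (C : Finset (ZMod M)) (z : ZMod M) : ℝ :=
  ∑ u : (ZMod M)ˣ, Complex.normSq (expSum C (u * z))

lemma unitPower_nonneg {M : ℕ} [NeZero M] (C : Finset (ZMod M)) (z : ZMod M) :
    0 ≤ unitPower C z :=
  Finset.sum_nonneg fun _ _ => Complex.normSq_nonneg _

lemma unitPower_eq_zero {M : ℕ} [NeZero M] {C : Finset (ZMod M)} {z : ZMod M}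
    (hz : expSum C z = 0) : unitPower C z = 0 :=
  Finset.sum_eq_zero fun u _ => by rw [expSum_unit_mul_eq_zero C u hz, map_zero]

/-- A positive value of `unitPower` is an integer, hence at least `1`. -/
lemma one_le_unitPower {M : ℕ} [NeZero M] {C : Finset (ZMod M)} {z : ZMod M}
    (hz : expSum C z ≠ 0) : 1 ≤ unitPower C z := by
  have hpos : 0 < unitPower C z := by
    refine Finset.sum_pos' (fun _ _ => Complex.normSq_nonneg _) ⟨1, Finset.mem_univ _, ?_⟩
    simpa [Complex.normSq_pos] using hz
  obtain ⟨m, hm⟩ : ∃ m : ℤ, unitPower C z = m := by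
    choose f hf using fun k : ZMod M => exists_int_sum_units k
    refine ⟨∑ c ∈ C, ∑ c' ∈ C, f (z * (c' - c)), ?_⟩
    have : ((unitPower C z : ℝ) : ℂ) =
        ((∑ c ∈ C, ∑ c' ∈ C, f (z * (c' - c)) : ℤ) : ℂ) := by
      rw [unitPower, Complex.ofReal_sum]
      simp only [normSq_expSum, mul_assoc]
      rw [Finset.sum_comm]
      push_cast
      refine Finset.sum_congr rfl fun c _ => ?_
      rw [Finset.sum_comm]
      exact Finset.sum_congr rfl fun c' _ => hf _
    exact_mod_cast this
  rw [hm] at hpos ⊢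
  have : 0 < m := by exact_mod_cast hpos
  exact_mod_cast this

lemma isStepFun_unitPower {M : ℕ} [NeZero M] (C : Finset (ZMod M)) :
    IsStepFun M (unitPower C) := by
  intro z w h
  obtain ⟨v, rfl⟩ := exists_unit_mul_of_gcd_eq h
  unfold unitPower
  refine (Fintype.sum_equiv (Equiv.mulRight v) _ _ fun u => ?_).symm
  simp [mul_assoc]

/-- `unitPower C` is a multiple of an average of autocorrelations of dilates of `C` on the
Fourier side, hence positive definite. -/
lemma fhat_unitPower {M : ℕ} [NeZero M] (C : Finset (ZMod M)) (ξ : ZMod M) :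
    fhat M (unitPower C) ξ = ((∑ u : (ZMod M)ˣ, ∑ c ∈ C, ∑ c' ∈ C,
      (if (u : ZMod M) * (c' - c) = ξ then (M : ℝ) else 0) : ℝ) : ℂ) := by
  rw [fhat_eq_sum_stdAddChar]
  simp only [unitPower, Complex.ofReal_sum, normSq_expSum, Finset.sum_mul,
    ← AddChar.map_add_eq_mul]
  rw [Finset.sum_comm]
  refine Finset.sum_congr rfl fun u _ => ?_
  rw [Finset.sum_comm]
  refine Finset.sum_congr rfl fun c _ => ?_
  rw [Finset.sum_comm]
  refine Finset.sum_congr rfl fun c' _ => ?_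
  have : ∀ z : ZMod M, (u : ZMod M) * z * (c' - c) + -(z * ξ) =
      z * ((u : ZMod M) * (c' - c) - ξ) := fun z => by ring
  simp only [this, sum_stdAddChar_mul, sub_eq_zero]
  split_ifs <;> simp

lemma sum_unitPower {M : ℕ} [NeZero M] (C : Finset (ZMod M)) :
    ∑ z, unitPower C z = (Nat.totient M : ℝ) * C.card * M := by
  have h := sum_eq_fhat_zero (unitPower C)
  rw [fhat_unitPower, Complex.ofReal_inj] at h
  rw [h]
  have h1 : ∀ (u : (ZMod M)ˣ) (c c' : ZMod M), (u : ZMod M) * (c' - c) = 0 ↔ c = c' := by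
    intro u c c'
    rw [Units.mul_right_eq_zero, sub_eq_zero, eq_comm]
  simp only [h1]
  simp [ZMod.card_units_eq_totient, mul_assoc]

lemma unitPower_zero {M : ℕ} [NeZero M] (C : Finset (ZMod M)) :
    unitPower C 0 = (Nat.totient M : ℝ) * (C.card : ℝ) ^ 2 := by
  simp [unitPower, expSum_zero, ZMod.card_units_eq_totient, Complex.normSq_natCast, sq]

/-! ### The two halves of the Delsarte duality -/

/-- Pairing a feasible function for `D^-(S)` with `|1̂_C|²`, where `1̂_C` vanishes on
`S ∖ {0}`, bounds its sum by `|C|` (Plancherel). -/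
lemma sum_le_card {M : ℕ} [NeZero M] {C : Finset (ZMod M)} (hC : C.Nonempty)
    {S : Set (ZMod M)} (hS : ∀ z ∈ S, z ≠ 0 → expSum C z = 0) {h : ZMod M → ℝ} (h0 : h 0 = 1)
    (hpd : ∀ ξ, (fhat M h ξ).im = 0 ∧ 0 ≤ (fhat M h ξ).re) (hneg : ∀ z ∉ S, h z ≤ 0) :
    ∑ z, h z ≤ C.card := by
  have hcard : (0 : ℝ) < C.card := by exact_mod_cast hC.card_pos
  have hup : ∑ z, h z * Complex.normSq (expSum C z) ≤ (C.card : ℝ) ^ 2 := by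
    rw [← Finset.add_sum_erase _ _ (Finset.mem_univ (0 : ZMod M)), h0, expSum_zero,
      Complex.normSq_natCast, one_mul]
    have : ∑ z ∈ Finset.univ.erase 0, h z * Complex.normSq (expSum C z) ≤ 0 := by
      refine Finset.sum_nonpos fun z hz => ?_
      by_cases hzS : z ∈ S
      · rw [hS z hzS (Finset.ne_of_mem_erase hz)]; simp
      · exact mul_nonpos_of_nonpos_of_nonneg (hneg z hzS) (Complex.normSq_nonneg _)
    nlinarith
  have hpl : ∑ z, h z * Complex.normSq (expSum C z) =
      ∑ c ∈ C, ∑ c' ∈ C, (fhat M h (c - c')).re := by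
    have : ((∑ z, h z * Complex.normSq (expSum C z) : ℝ) : ℂ) =
        ∑ c ∈ C, ∑ c' ∈ C, fhat M h (c - c') := by
      simp only [fhat_eq_sum_stdAddChar, Complex.ofReal_sum, Complex.ofReal_mul, normSq_expSum,
        Finset.mul_sum]
      rw [Finset.sum_comm]
      refine Finset.sum_congr rfl fun c _ => ?_
      rw [Finset.sum_comm]
      refine Finset.sum_congr rfl fun c' _ => Finset.sum_congr rfl fun z _ => ?_
      congr 2
      ring
    simpa using congrArg Complex.re this
  -- only the diagonal terms `c = c'` are kept
  have hlow : (C.card : ℝ) * ∑ z, h z ≤ ∑ c ∈ C, ∑ c' ∈ C, (fhat M h (c - c')).re := by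
    rw [← nsmul_eq_mul]
    refine Finset.card_nsmul_le_sum _ _ _ fun c hc => ?_
    have h1 : ∑ z, h z = (fhat M h (c - c)).re := by
      rw [sub_self, ← sum_eq_fhat_zero, Complex.ofReal_re]
    rw [h1]
    exact Finset.single_le_sum (f := fun c' => (fhat M h (c - c')).re)
      (fun c' _ => (hpd _).2) hc
  rw [← hpl] at hlow
  nlinarith

/-- The normalized averaged power spectrum of `C` is a feasible function. -/
lemma exists_feasible {M : ℕ} [NeZero M] {C : Finset (ZMod M)} (hC : C.Nonempty) :
    ∃ h : ZMod M → ℝ, IsStepFun M h ∧ h 0 = 1 ∧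
      (∀ ξ, (fhat M h ξ).im = 0 ∧ 0 ≤ (fhat M h ξ).re) ∧
      (∀ z, 0 ≤ h z) ∧ (∀ z, expSum C z = 0 → h z = 0) ∧
      (∀ z, expSum C z ≠ 0 → 1 / ((M : ℝ) ^ 2 * (Nat.totient M : ℝ)) ≤ h z) ∧
      (C.card : ℝ) * ∑ z, h z = M := by
  have hcard : (0 : ℝ) < C.card := by exact_mod_cast hC.card_pos
  have htot : (0 : ℝ) < Nat.totient M := by exact_mod_cast Nat.totient_pos.2 (NeZero.pos M)
  have hle : (C.card : ℝ) ≤ M := by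
    have := Finset.card_le_univ C
    rw [ZMod.card] at this
    exact_mod_cast this
  have hden : 0 < (Nat.totient M : ℝ) * (C.card : ℝ) ^ 2 := by positivity
  set κ : ℝ := ((Nat.totient M : ℝ) * (C.card : ℝ) ^ 2)⁻¹ with hκ
  have hκpos : 0 < κ := inv_pos.2 hden
  refine ⟨fun z => κ * unitPower C z, ?_, ?_, ?_, ?_, ?_, ?_, ?_⟩
  · intro z w h
    simp only [isStepFun_unitPower C z w h]
  · simp only [unitPower_zero]
    exact inv_mul_cancel₀ hden.ne'
  · intro ξ
    have h1 : fhat M (fun z => κ * unitPower C z) ξ = (κ : ℂ) * fhat M (unitPower C) ξ := by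
      simp only [fhat_eq_sum_stdAddChar, Finset.mul_sum, Complex.ofReal_mul, mul_assoc]
    rw [h1, fhat_unitPower, ← Complex.ofReal_mul, Complex.ofReal_im, Complex.ofReal_re]
    refine ⟨rfl, mul_nonneg hκpos.le ?_⟩
    refine Finset.sum_nonneg fun _ _ => Finset.sum_nonneg fun _ _ =>
      Finset.sum_nonneg fun _ _ => ?_
    split_ifs <;> simp
  · exact fun z => mul_nonneg hκpos.le (unitPower_nonneg C z)
  · intro z hz
    simp only [unitPower_eq_zero hz, mul_zero]
  · intro z hz
    have h1 : 1 / ((M : ℝ) ^ 2 * (Nat.totient M : ℝ)) ≤ κ := by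
      rw [hκ, one_div, mul_comm]
      gcongr
    exact h1.trans (le_mul_of_one_le_right hκpos.le (one_le_unitPower hz))
  · rw [← Finset.mul_sum, sum_unitPower, hκ]
    field_simp

/-! ### Tilings -/

lemma sum_add_of_isTiling {M : ℕ} [NeZero M] {A B : Finset (ZMod M)} (h : IsTiling M A B)
    (f : ZMod M → ℂ) : ∑ a ∈ A, ∑ b ∈ B, f (a + b) = ∑ z, f z := by
  rw [← Finset.sum_product' A B fun a b => f (a + b)]
  refine Finset.sum_bij (fun ab _ => ab.1 + ab.2) (fun _ _ => Finset.mem_univ _) ?_ ?_ ?_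
  · intro x hx y hy hxy
    rw [Finset.mem_product] at hx hy
    exact (h (x.1 + x.2)).unique ⟨hx.1, hx.2, rfl⟩ ⟨hy.1, hy.2, hxy.symm⟩
  · intro z _
    obtain ⟨ab, ⟨ha, hb, hz⟩, -⟩ := h z
    exact ⟨ab, Finset.mem_product.2 ⟨ha, hb⟩, hz⟩
  · intro _ _; rfl

lemma expSum_mul_expSum {M : ℕ} [NeZero M] {A B : Finset (ZMod M)} (h : IsTiling M A B)
    (ξ : ZMod M) : expSum A ξ * expSum B ξ = if ξ = 0 then (M : ℂ) else 0 := by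
  rw [expSum, expSum, Finset.sum_mul_sum]
  have h1 := sum_add_of_isTiling h fun z => (stdAddChar (-(z * ξ)) : ℂ)
  have h2 : ∀ a b : ZMod M, (stdAddChar (-((a + b) * ξ)) : ℂ) =
      stdAddChar (-(a * ξ)) * stdAddChar (-(b * ξ)) := fun a b => by
    rw [← AddChar.map_add_eq_mul]; congr 1; ring
  simp only [h2] at h1
  rw [h1]
  have h3 := sum_stdAddChar_mul (-ξ)
  simpa using h3

lemma card_mul_card_of_isTiling {M : ℕ} [NeZero M] {A B : Finset (ZMod M)}
    (h : IsTiling M A B) : A.card * B.card = M := by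
  have h1 := expSum_mul_expSum h 0
  rw [expSum_zero, expSum_zero, if_pos rfl] at h1
  exact_mod_cast h1

/-- The class `R_{M/s}` of a divisor `s` of `M` contains `M / s`. -/
lemma gcd_val_div {M : ℕ} [NeZero M] {s : ℕ} (hs : s ∣ M) :
    Nat.gcd ((M / s : ℕ) : ZMod M).val M = M / s := by
  rw [ZMod.val_natCast, ← Nat.gcd_rec, Nat.gcd_comm]
  exact Nat.gcd_eq_left (Nat.div_dvd_of_dvd hs)

lemma div_cast_ne_zero {M : ℕ} [NeZero M] {s : ℕ} (hs : s ∣ M) (h1 : 1 < s) :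
    ((M / s : ℕ) : ZMod M) ≠ 0 := by
  rw [Ne, ZMod.natCast_eq_zero_iff]
  intro h
  exact (Nat.div_lt_self (NeZero.pos M) h1).not_ge
    (Nat.le_of_dvd (Nat.div_pos (Nat.le_of_dvd (NeZero.pos M) hs) (by omega)) h)

/-- For a union of step classes, membership of `R_{M/s}` is tested on the element `M / s`. -/
lemma mem_SH_iff {M : ℕ} [NeZero M] {H : Set (ZMod M)}
    (hH : IsStepSet M H) {s : ℕ} :
    s ∈ SH M H ↔ s ∣ M ∧ IsPrimePow s ∧ ((M / s : ℕ) : ZMod M) ∈ H := by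
  simp only [SH, Finset.mem_filter, Nat.mem_divisors]
  constructor
  · rintro ⟨⟨hs, -⟩, hp, h⟩
    exact ⟨hs, hp, h _ (gcd_val_div hs)⟩
  · rintro ⟨hs, hp, h⟩
    exact ⟨⟨hs, NeZero.ne M⟩, hp, fun ξ hξ => (hH _ _ (hξ.trans (gcd_val_div hs).symm)).2 h⟩

/-- The Coven–Meyerowitz condition (T1) for both tiles: `k_H` divides `|B|`, `k_{H'}` divides
`|A|`, and `k_H k_{H'} = M = |A||B|`. -/
lemma kH_eq_card {M : ℕ} [NeZero M] {A B : Finset (ZMod M)} (h : IsTiling M A B)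
    {H H' : Set (ZMod M)} (hH : H = {ξ | expSum A ξ ≠ 0}) (hH' : H' = Hᶜ ∪ {0}) :
    kH M H = B.card ∧ kH M H' = A.card := by
  have hstep : IsStepSet M H := fun z w hzw => by
    rw [hH]; exact not_congr (expSum_eq_zero_iff_of_gcd_eq A hzw)
  have hval : ∀ z w : ZMod M, Nat.gcd z.val M = Nat.gcd w.val M → z = 0 → w = 0 := by
    rintro z w hzw rfl
    obtain ⟨u, rfl⟩ := exists_unit_mul_of_gcd_eq hzw
    simp
  have hstep' : IsStepSet M H' := fun z w hzw => by
    rw [hH']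
    exact or_congr (not_congr (hstep z w hzw)) ⟨hval z w hzw, hval w z hzw.symm⟩
  have hmem : ∀ s, s ∈ SH M H ↔
      (s ∣ M ∧ IsPrimePow s) ∧ expSum A ((M / s : ℕ) : ZMod M) ≠ 0 := fun s => by
    rw [mem_SH_iff hstep, hH, and_assoc]; rfl
  have hmem' : ∀ s, s ∈ SH M H' ↔
      (s ∣ M ∧ IsPrimePow s) ∧ ¬ expSum A ((M / s : ℕ) : ZMod M) ≠ 0 := fun s => by
    rw [mem_SH_iff hstep', hH', hH, and_assoc]
    refine and_congr_right fun hs => and_congr_right fun hp => ?_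
    exact or_iff_left (div_cast_ne_zero hs hp.one_lt)
  have hprod : kH M H * kH M H' = M := by
    have h1 : SH M H = (M.divisors.filter IsPrimePow).filter
        (fun s => expSum A ((M / s : ℕ) : ZMod M) ≠ 0) := by
      ext s; rw [hmem]; simp [NeZero.ne M]
    have h2 : SH M H' = (M.divisors.filter IsPrimePow).filter
        (fun s => ¬ expSum A ((M / s : ℕ) : ZMod M) ≠ 0) := by
      ext s; rw [hmem']; simp [NeZero.ne M]
    rw [kH, kH, h1, h2, Finset.prod_filter_mul_prod_filter_not,
      prod_minFac_primePow_divisors M (NeZero.ne M)]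
  have hd' : kH M H' ∣ A.card := prod_minFac_dvd_card A _ fun s hs => by
    obtain ⟨⟨h1, h2⟩, h3⟩ := (hmem' s).1 hs
    exact ⟨h1, h2, not_not.1 h3⟩
  have hd : kH M H ∣ B.card := prod_minFac_dvd_card B _ fun s hs => by
    obtain ⟨⟨h1, h2⟩, h3⟩ := (hmem s).1 hs
    refine ⟨h1, h2, ?_⟩
    have := expSum_mul_expSum h ((M / s : ℕ) : ZMod M)
    rw [if_neg (div_cast_ne_zero h1 h2.one_lt)] at this
    exact (mul_eq_zero.1 this).resolve_left h3
  have hAB := card_mul_card_of_isTiling h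
  have hM := NeZero.pos M
  have hA : 0 < A.card := Nat.pos_of_ne_zero fun h0 => by simp [h0] at hAB; omega
  have hB : 0 < B.card := Nat.pos_of_ne_zero fun h0 => by simp [h0] at hAB; omega
  have hle := Nat.le_of_dvd hB hd
  have hle' := Nat.le_of_dvd hA hd'
  constructor <;> nlinarith

/-- Let `δ = 1/(M²·φ(M))`, let `A ⊕ B = ℤ_M` be a tiling, and let
`H = supp |1̂_A|²` with standard complement `H' = Hᶜ ∪ {0}`. Then
`D^{δ+}(H) = D^+(H) = D^−(H) = k_H = |B|` and `D^+(H') = D^−(H') = k_{H'} = |A|`. -/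
theorem statement7 (M : ℕ) [NeZero M]
    (δ : ℝ) (hδ : δ = 1 / ((M : ℝ) ^ 2 * (Nat.totient M : ℝ)))
    (A B : Finset (ZMod M)) (htile : IsTiling M A B)
    (H : Set (ZMod M))
    (hH : H = {ξ : ZMod M | fhat M (fun z => if z ∈ A then (1 : ℝ) else 0) ξ ≠ 0})
    (H' : Set (ZMod M)) (hH' : H' = Hᶜ ∪ {0}) :
    Ddelta M δ H = Dplus M H ∧ Dplus M H = Dminus M H ∧
      Dminus M H = (kH M H : ℝ) ∧ kH M H = B.card ∧
    Dplus M H' = Dminus M H' ∧ Dminus M H' = (kH M H' : ℝ) ∧ kH M H' = A.card := by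
  simp only [fhat_indicator] at hH
  obtain ⟨hk, hk'⟩ := kH_eq_card htile hH hH'
  have hAB := card_mul_card_of_isTiling htile
  have hAB' : (A.card : ℝ) * B.card = M := by exact_mod_cast hAB
  have hMpos := NeZero.pos M
  have hA : A.Nonempty := Finset.card_pos.1 <|
    Nat.pos_of_ne_zero fun h0 => by simp [h0] at hAB; omega
  have hB : B.Nonempty := Finset.card_pos.1 <|
    Nat.pos_of_ne_zero fun h0 => by simp [h0] at hAB; omega
  have hA0 : (A.card : ℝ) ≠ 0 := by exact_mod_cast hA.card_pos.ne'
  have hB0 : (B.card : ℝ) ≠ 0 := by exact_mod_cast hB.card_pos.ne'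
  have hmemH : ∀ z, z ∈ H ↔ expSum A z ≠ 0 := fun z => by rw [hH]; rfl
  have hmemH' : ∀ z, z ∈ H' ↔ expSum A z = 0 ∨ z = 0 := fun z => by
    rw [hH', Set.mem_union, Set.mem_compl_iff, hmemH, not_not]; rfl
  have hδ0 : 0 ≤ δ := by rw [hδ]; positivity
  -- `1̂_B` vanishes on `H ∖ {0}` and `1̂_A` vanishes on `H' ∖ {0}`
  have hBz : ∀ z ∈ H, z ≠ 0 → expSum B z = 0 := fun z hz h0 => by
    have := expSum_mul_expSum htile z
    rw [if_neg h0] at this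
    exact (mul_eq_zero.1 this).resolve_left ((hmemH z).1 hz)
  have hAz : ∀ z ∈ H', z ≠ 0 → expSum A z = 0 := fun z hz h0 =>
    ((hmemH' z).1 hz).resolve_right h0
  obtain ⟨f, f1, f2, f3, f4, f5, f6, f7⟩ := exists_feasible hA
  obtain ⟨g, g1, g2, g3, g4, g5, -, g7⟩ := exists_feasible hB
  have hf : (B.card : ℝ) = ∑ z, f z := mul_left_cancel₀ hA0 (by rw [f7, hAB'])
  have hg : (A.card : ℝ) = ∑ z, g z := mul_left_cancel₀ hB0 (by rw [g7, mul_comm, hAB'])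
  have hfH : ∀ z ∉ H, f z = 0 := fun z hz => f5 z (by simpa [hmemH] using hz)
  have hgH : ∀ z ∉ H', g z = 0 := fun z hz => g5 z <| by
    rw [hmemH', not_or] at hz
    exact hBz z ((hmemH z).2 hz.1) hz.2
  have e1 : Ddelta M δ H = B.card := by
    refine IsGreatest.csSup_eq ⟨⟨f, f1, f2, f3, fun z hz => ?_, hfH, hf⟩, ?_⟩
    · rw [hδ]; exact f6 z ((hmemH z).1 hz)
    · rintro t ⟨h, -, h0, hpd, -, hz, rfl⟩
      exact sum_le_card hB hBz h0 hpd fun z hzH => (hz z hzH).le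
  have e2 : Dplus M H = B.card := by
    refine IsGreatest.csSup_eq ⟨⟨f, f1, f2, f3, fun z _ => f4 z, hfH, hf⟩, ?_⟩
    rintro t ⟨h, -, h0, hpd, -, hz, rfl⟩
    exact sum_le_card hB hBz h0 hpd fun z hzH => (hz z hzH).le
  have e3 : Dminus M H = B.card := by
    refine IsGreatest.csSup_eq ⟨⟨f, f1, f2, f3, fun z hz => (hfH z hz).le, hf⟩, ?_⟩
    rintro t ⟨h, -, h0, hpd, hz, rfl⟩
    exact sum_le_card hB hBz h0 hpd hz
  have e4 : Dplus M H' = A.card := by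
    refine IsGreatest.csSup_eq ⟨⟨g, g1, g2, g3, fun z _ => g4 z, hgH, hg⟩, ?_⟩
    rintro t ⟨h, -, h0, hpd, -, hz, rfl⟩
    exact sum_le_card hA hAz h0 hpd fun z hzH => (hz z hzH).le
  have e5 : Dminus M H' = A.card := by
    refine IsGreatest.csSup_eq ⟨⟨g, g1, g2, g3, fun z hz => (hgH z hz).le, hg⟩, ?_⟩
    rintro t ⟨h, -, h0, hpd, hz, rfl⟩
    exact sum_le_card hA hAz h0 hpd hz
  rw [hk, hk', e1, e2, e3, e4, e5]
  exact ⟨rfl, rfl, rfl, rfl, rfl, rfl, rfl⟩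
end

section
/- Let M = ∏_{i=1}^K p_i^{n_i}, let Δ be an M-cuboid, and let f : ℤ_M → ℝ be a step function. Suppose there exist i ∈ {1,…,K} and β ≤ n_i − 1 such that every vertex x_ε of Δ satisfies gcd(x_ε, p_i^{n_i}) = p_i^β. Then F[Δ] = 0. -/
/-!
Group the vertices of the cuboid into the pairs differing by the single edge `ρᵢ M / pᵢ`; the two
vertices of a pair carry opposite signs. Write `M = pᵢ ^ nᵢ * N` with `N` coprime to `pᵢ`. The
edge is a multiple of `N`, so both vertices have the same gcd with `N`, and by hypothesis both have
gcd `pᵢ ^ β` with `pᵢ ^ nᵢ`. Hence they lie in the same step class (`gcd_val_eq_of_coprime_parts`),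
`f` agrees on them, and each pair contributes `0`.
-/

open Finset

/-- A translation by a multiple of `N ∣ M` does not change the residue modulo `N`, hence preserves
the gcd with `N`. -/
lemma gcd_val_add_natCast (M : ℕ) [NeZero M] {N k : ℕ} (hN : N ∣ M) (hk : N ∣ k) (x : ZMod M) :
    Nat.gcd (x + (k : ZMod M)).val N = Nat.gcd x.val N := by
  apply Nat.ModEq.gcd_eq
  rw [ZMod.val_add, ZMod.val_natCast]
  have h1 : (x.val + k % M) % M ≡ x.val + k [MOD M] :=
    (Nat.mod_modEq _ _).trans ((Nat.mod_modEq k M).add_left _)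
  have h2 : x.val + k ≡ x.val + 0 [MOD N] :=
    ((Nat.modEq_zero_iff_dvd).2 hk).add_left _
  exact (h1.of_dvd hN).trans h2

lemma gcd_val_eq_of_coprime_parts (M : ℕ) [NeZero M] {a N k : ℕ} (hM : M = a * N)
    (hcop : Nat.Coprime a N) (hk : N ∣ k) (x : ZMod M)
    (ha : Nat.gcd (x + (k : ZMod M)).val a = Nat.gcd x.val a) :
    Nat.gcd (x + (k : ZMod M)).val M = Nat.gcd x.val M := by
  have key : ∀ z : ℕ, Nat.gcd z M = Nat.gcd z a * Nat.gcd z N := fun z => by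
    rw [hM, Nat.Coprime.gcd_mul z hcop]
  rw [key, key, ha, gcd_val_add_natCast M ⟨a, by rw [hM, mul_comm]⟩ hk]

/-- If for some `i` and `β ≤ nᵢ − 1` every vertex `x_ε` of the
`M`-cuboid `Δ` satisfies `gcd(x_ε, pᵢ^{nᵢ}) = pᵢ^β`, and `f` is a step function,
then `F[Δ] = 0`. -/
theorem statement9 (K : ℕ) (p n : Fin K → ℕ) (hp : ∀ i, (p i).Prime)
    (hn : ∀ i, 1 ≤ n i) (hdist : Function.Injective p)
    (M : ℕ) [NeZero M] (hM : M = ∏ i, p i ^ n i)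
    (f : ZMod M → ℝ) (hf : IsStepFun M f)
    (c : ZMod M) (ρ : Fin K → ℕ) (hρ : ∀ i, 1 ≤ ρ i ∧ ρ i ≤ p i - 1)
    (i : Fin K) (β : ℕ) (hβ : β ≤ n i - 1)
    (hall : ∀ S : Finset (Fin K),
      Nat.gcd (cubVertex M p c ρ S).val (p i ^ n i) = p i ^ β) :
    cubEval M p c ρ f = 0 := by
  have hcop : Nat.Coprime (p i ^ n i) (∏ j ∈ univ.erase i, p j ^ n j) := by
    refine Nat.Coprime.prod_right fun j hj => Nat.Coprime.pow _ _ ?_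
    exact (Nat.coprime_primes (hp i) (hp j)).2 fun h => (mem_erase.1 hj).1 (hdist h).symm
  have hMN : M = p i ^ n i * ∏ j ∈ univ.erase i, p j ^ n j := by
    rw [hM, mul_prod_erase univ (fun j => p j ^ n j) (mem_univ i)]
  have hk : (∏ j ∈ univ.erase i, p j ^ n j) ∣ ρ i * (M / p i) := by
    refine Dvd.dvd.mul_left ?_ _
    -- since `nᵢ ≥ 1`, one factor `pᵢ` can be removed from `pᵢ ^ nᵢ`
    obtain ⟨m, hm⟩ := Nat.exists_eq_add_of_le' (hn i)
    refine ⟨p i ^ m, Nat.div_eq_of_eq_mul_right (hp i).pos ?_⟩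
    conv_lhs => rw [hMN, hm]
    ring
  have hpair : ∀ S : Finset (Fin K), i ∉ S →
      f (cubVertex M p c ρ (insert i S)) = f (cubVertex M p c ρ S) := by
    intro S hS
    have hv : cubVertex M p c ρ (insert i S) =
        cubVertex M p c ρ S + ((ρ i * (M / p i) : ℕ) : ZMod M) := by
      unfold cubVertex
      rw [sum_insert hS]
      ring
    have ha := (hall (insert i S)).trans (hall S).symm
    rw [hv] at ha ⊢
    exact hf _ _ (gcd_val_eq_of_coprime_parts M hMN hcop hk _ ha)
  unfold cubEval
  rw [← powerset_univ, ← insert_erase (mem_univ i), sum_powerset_insert (notMem_erase i univ),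
    ← sum_add_distrib]
  refine sum_eq_zero fun S hS => ?_
  have hS' : i ∉ S := fun h => notMem_erase i univ (mem_powerset.1 hS h)
  rw [hpair S hS', card_insert_of_notMem hS']
  ring
end

section
/- Let M = ∏_{i=1}^K p_i^{n_i} with K ≥ 1, and let f : ℤ_M → ℝ be a step function. The following are equivalent: (I) f̂(ξ) = 0 for every ξ ∈ ℤ_M with gcd(ξ, M) = 1 (i.e., Φ_M divides the mask polynomial F); (II) F[Δ] = 0 for every M-cuboid Δ having 0 among its vertices; (III) F[Δ] = 0 for some M-cuboid Δ having 0 among its vertices. -/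
/-!
Write `F m` for the value of `f` on the step class `R_m`. Both the Fourier coefficients of `f` at
units and its evaluations on cuboids through `0` are, up to sign, the Möbius sum
`D = ∑_{d ∣ M} μ(d) F(M / d)`.

* Fourier side (`sum_gcd_mul_pow`): Möbius inversion writes `F = ∑_{e ∣ ·} G e`, so
  `f̂(ξ) = ∑_{e ∣ M} G e ∑_{z < M, e ∣ z} ζ ^ z` with `ζ` a primitive `M`-th root of unity. The inner
  sum runs over all powers of a primitive `M / e`-th root of unity and vanishes unless `e = M`.
  Hence `f̂(ξ) = G M = D`.
* Cuboid side (`cubEval_eq`): if the vertex indexed by `S₀` is `0`, the vertex indexed by `S` has gcd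
  `M / ∏_{i ∈ S ∆ S₀} p_i` with `M` (`gcd_vertex`). So the evaluation is
  `(-1)^{|S₀|} ∑_T (-1)^{|T|} F(M / ∏_{i ∈ T} p_i)`, and this sum over `T` is `D`, since only the
  squarefree divisors `∏_{i ∈ T} p_i` contribute to `D` (`sum_subsets_eq_moebius`).

Consequently each of the three conditions is equivalent to `D = 0`.
-/

open Finset

lemma gcd_val_intCast (M : ℕ) [NeZero M] (a : ℤ) :
    Nat.gcd (a : ZMod M).val M = Int.gcd a M := by
  rw [← Int.gcd_natCast_natCast, ZMod.val_intCast]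
  exact Int.gcd_emod a M

lemma sum_pow_multiples {M e : ℕ} (hM : M ≠ 0) (he : e ∣ M) {ζ : ℂ} (hζ : IsPrimitiveRoot ζ M) :
    ∑ z ∈ range M with e ∣ z, ζ ^ z = if e = M then 1 else 0 := by
  obtain ⟨k, rfl⟩ := he
  have he0 : 0 < e := Nat.pos_of_ne_zero (by rintro rfl; simp at hM)
  have hk0 : 0 < k := Nat.pos_of_ne_zero (by rintro rfl; simp at hM)
  have h1 : ∑ z ∈ range (e * k) with e ∣ z, ζ ^ z = ∑ j ∈ range k, (ζ ^ e) ^ j := by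
    symm
    refine Finset.sum_bij (fun j _ => e * j) ?_ ?_ ?_ ?_
    · intro j hj
      simp only [mem_filter, mem_range] at hj ⊢
      exact ⟨Nat.mul_lt_mul_of_pos_left hj he0, dvd_mul_right _ _⟩
    · intro a _ b _ h
      exact Nat.eq_of_mul_eq_mul_left he0 h
    · intro z hz
      simp only [mem_filter, mem_range] at hz
      obtain ⟨hz, j, rfl⟩ := hz
      exact ⟨j, mem_range.2 (Nat.lt_of_mul_lt_mul_left hz), rfl⟩
    · intro j _
      rw [pow_mul]
  rw [h1]
  have h2 : IsPrimitiveRoot (ζ ^ e) k := hζ.pow (Nat.pos_of_ne_zero hM) rfl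
  split_ifs with h
  · have : k = 1 := by
      have : e * k = e * 1 := by omega
      exact Nat.eq_of_mul_eq_mul_left he0 this
    subst this
    simp
  · refine h2.geom_sum_eq_zero ?_
    by_contra hk
    have : k = 1 := by omega
    subst this
    simp at h

lemma sum_gcd_mul_pow {M : ℕ} (hM : M ≠ 0) {ζ : ℂ} (hζ : IsPrimitiveRoot ζ M) (F : ℕ → ℂ) :
    ∑ z ∈ range M, F (Nat.gcd z M) * ζ ^ z =
      ∑ x ∈ M.divisorsAntidiagonal, (ArithmeticFunction.moebius x.1 : ℂ) * F x.2 := by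
  set G : ℕ → ℂ := fun n =>
    ∑ x ∈ n.divisorsAntidiagonal, (ArithmeticFunction.moebius x.1 : ℂ) * F x.2 with hG
  have hinv := (ArithmeticFunction.sum_eq_iff_sum_mul_moebius_eq (f := G) (g := F)).2
    (fun n _ => rfl)
  change _ = G M
  have h1 : ∀ z ∈ range M, F (Nat.gcd z M) * ζ ^ z =
      ∑ e ∈ M.divisors, if e ∣ z then G e * ζ ^ z else 0 := by
    intro z _
    rw [← hinv _ (Nat.gcd_pos_of_pos_right z (Nat.pos_of_ne_zero hM)), ← Finset.sum_filter,
      Finset.sum_mul]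
    refine Finset.sum_congr ?_ fun _ _ => rfl
    ext e
    simp only [Nat.mem_divisors, mem_filter, Nat.dvd_gcd_iff]
    have : Nat.gcd z M ≠ 0 := (Nat.gcd_pos_of_pos_right z (Nat.pos_of_ne_zero hM)).ne'
    tauto
  rw [Finset.sum_congr rfl h1, Finset.sum_comm]
  have h2 : ∀ e ∈ M.divisors, (∑ z ∈ range M, if e ∣ z then G e * ζ ^ z else 0) =
      if e = M then G e else 0 := by
    intro e he
    rw [← Finset.sum_filter, ← Finset.mul_sum,
      sum_pow_multiples hM (Nat.dvd_of_mem_divisors he) hζ]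
    simp
  rw [Finset.sum_congr rfl h2, Finset.sum_ite_eq' M.divisors M]
  simp [hM]

/-- A Fourier coefficient of a step function at a unit is the Möbius sum of its step values. -/
lemma fhat_eq (M : ℕ) [NeZero M] (f : ZMod M → ℝ) (hf : IsStepFun M f) (ξ : ZMod M)
    (hξ : Nat.gcd ξ.val M = 1) :
    fhat M f ξ = ∑ x ∈ M.divisorsAntidiagonal,
      (ArithmeticFunction.moebius x.1 : ℂ) * (f (x.2 : ZMod M) : ℂ) := by
  have hM : M ≠ 0 := NeZero.ne M
  have hζ := (Complex.isPrimitiveRoot_exp_of_coprime ξ.val M hM hξ).inv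
  rw [← sum_gcd_mul_pow hM hζ (fun m => (f (m : ZMod M) : ℂ)), fhat]
  refine Finset.sum_bij (fun z _ => z.val) (fun z _ => mem_range.2 (ZMod.val_lt z))
    (fun a _ b _ h => ZMod.val_injective M h)
    (fun b hb => ⟨(b : ZMod M), mem_univ _, ZMod.val_cast_of_lt (mem_range.1 hb)⟩) ?_
  intro z _
  have hz : f z = f ((Nat.gcd z.val M : ℕ) : ZMod M) := by
    apply hf
    have := gcd_val_intCast M ((Nat.gcd z.val M : ℕ) : ℤ)
    simp only [Int.cast_natCast, Int.gcd_natCast_natCast] at this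
    rw [this]
    simp
  rw [← hz, ← Complex.exp_neg, ← Complex.exp_nat_mul]
  congr 2
  field_simp

section cuboid

variable {K : ℕ} {p n : Fin K → ℕ}

lemma prod_dvd_M (hn : ∀ i, 1 ≤ n i) {M : ℕ} (hM : M = ∏ i, p i ^ n i) (T : Finset (Fin K)) :
    ∏ i ∈ T, p i ∣ M := by
  rw [hM]
  exact (Finset.prod_dvd_prod_of_subset _ _ _ (subset_univ T)).trans
    (Finset.prod_dvd_prod_of_dvd _ _ fun i _ => dvd_pow_self _ (by have := hn i; omega))

lemma prime_dvd_prod_iff (hp : ∀ i, (p i).Prime) (hdist : Function.Injective p)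
    (T : Finset (Fin K)) (i : Fin K) : p i ∣ ∏ j ∈ T, p j ↔ i ∈ T := by
  rw [(hp i).prime.dvd_finsetProd_iff]
  constructor
  · rintro ⟨j, hj, h⟩
    rwa [hdist ((Nat.prime_dvd_prime_iff_eq (hp i) (hp j)).1 h)]
  · intro h
    exact ⟨i, h, dvd_rfl⟩

lemma sum_subsets_eq_moebius (hp : ∀ i, (p i).Prime) (hn : ∀ i, 1 ≤ n i)
    (hdist : Function.Injective p) {M : ℕ} (hM0 : M ≠ 0) (hM : M = ∏ i, p i ^ n i) (F : ℕ → ℝ) :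
    ∑ T : Finset (Fin K), (-1 : ℝ) ^ T.card * F (M / ∏ i ∈ T, p i) =
      ∑ x ∈ M.divisorsAntidiagonal, (ArithmeticFunction.moebius x.1 : ℝ) * F x.2 := by
  rw [Nat.sum_divisorsAntidiagonal (fun a b => (ArithmeticFunction.moebius a : ℝ) * F b)]
  refine Finset.sum_of_injOn (fun T => ∏ i ∈ T, p i) ?_ ?_ ?_ ?_
  · intro T _ T' _ h
    ext i
    rw [← prime_dvd_prod_iff hp hdist, ← prime_dvd_prod_iff hp hdist T']
    simp only at h
    rw [h]
  · intro T _
    simp only [mem_coe, Nat.mem_divisors]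
    exact ⟨prod_dvd_M hn hM T, hM0⟩
  · intro d hd hnot
    -- A squarefree divisor of `M` would be the product of the `p i` dividing it.
    have : ¬ Squarefree d := by
      intro hsq
      apply hnot
      refine ⟨univ.filter (fun i => p i ∣ d), by simp, ?_⟩
      have h1 : d.primeFactors = (univ.filter (fun i => p i ∣ d)).image p := by
        ext q
        simp only [Nat.mem_primeFactors, mem_image, mem_filter, mem_univ, true_and]
        constructor
        · rintro ⟨hq, hqd, _⟩
          have hqM : q ∣ ∏ i, p i ^ n i := hM ▸ hqd.trans (Nat.dvd_of_mem_divisors hd)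
          obtain ⟨i, _, hi⟩ := (hq.prime.dvd_finsetProd_iff _).1 hqM
          have := (Nat.prime_dvd_prime_iff_eq hq (hp i)).1 (hq.dvd_of_dvd_pow hi)
          exact ⟨i, this ▸ hqd, this.symm⟩
        · rintro ⟨i, hi, rfl⟩
          exact ⟨hp i, hi, hsq.ne_zero⟩
      have h2 := Nat.prod_primeFactors_of_squarefree hsq
      rw [h1, Finset.prod_image (fun _ _ _ _ h => hdist h)] at h2
      exact h2
    simp [ArithmeticFunction.moebius_eq_zero_of_not_squarefree this]
  · intro T _
    have h : ArithmeticFunction.moebius (∏ i ∈ T, p i) = (-1) ^ T.card := by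
      rw [ArithmeticFunction.isMultiplicative_moebius.map_prod p T]
      · simp [ArithmeticFunction.moebius_apply_prime (hp _)]
      · intro i _ j _ hij
        exact (Nat.coprime_primes (hp i) (hp j)).2 (fun h => hij (hdist h))
    simp [h]

/-- With `m = M / ∏_{i ∈ T} p i`, the sum is `m` times an integer prime to every `p j`, `j ∈ T`:
modulo `p j` only the `j`-th term of the cofactor survives. -/
lemma gcd_vertex (hp : ∀ i, (p i).Prime) (hn : ∀ i, 1 ≤ n i)
    (hdist : Function.Injective p) {M : ℕ} (hM : M = ∏ i, p i ^ n i)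
    (T : Finset (Fin K)) (t : Fin K → ℤ) (ht : ∀ i ∈ T, ¬ (p i : ℤ) ∣ t i) :
    Int.gcd (∑ i ∈ T, t i * ((M / p i : ℕ) : ℤ)) M = M / ∏ i ∈ T, p i := by
  obtain ⟨m, hm⟩ := prod_dvd_M hn hM T
  set Q := ∏ i ∈ T, p i with hQ
  have hQ0 : 0 < Q := Finset.prod_pos fun i _ => (hp i).pos
  have hterm : ∀ i ∈ T, M / p i = m * ∏ j ∈ T.erase i, p j := by
    intro i hi
    apply Nat.div_eq_of_eq_mul_right (hp i).pos
    rw [hm, hQ, ← Finset.mul_prod_erase T p hi]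
    ring
  have hsum : ∑ i ∈ T, t i * ((M / p i : ℕ) : ℤ) =
      m * ∑ i ∈ T, t i * ((∏ j ∈ T.erase i, p j : ℕ) : ℤ) := by
    rw [Finset.mul_sum]
    refine Finset.sum_congr rfl fun i hi => ?_
    rw [hterm i hi]
    push_cast
    ring
  have hcop : IsCoprime (∑ i ∈ T, t i * ((∏ j ∈ T.erase i, p j : ℕ) : ℤ)) (Q : ℤ) := by
    rw [hQ, Nat.cast_prod]
    refine IsCoprime.prod_right fun j hj => ?_
    have hpj : Prime (p j : ℤ) := Nat.prime_iff_prime_int.1 (hp j)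
    refine IsCoprime.symm ((hpj.irreducible.coprime_iff_not_dvd).2 fun hdvd => ?_)
    rw [← Finset.add_sum_erase T _ hj] at hdvd
    have hrest : (p j : ℤ) ∣ ∑ i ∈ T.erase j, t i * ((∏ k ∈ T.erase i, p k : ℕ) : ℤ) := by
      refine Finset.dvd_sum fun i hi => Dvd.dvd.mul_left ?_ _
      rw [Int.natCast_dvd_natCast, prime_dvd_prod_iff hp hdist]
      exact mem_erase.2 ⟨(ne_of_mem_erase hi).symm, hj⟩
    rcases hpj.dvd_or_dvd ((dvd_add_left hrest).1 hdvd) with h | h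
    · exact ht j hj h
    · rw [Int.natCast_dvd_natCast, prime_dvd_prod_iff hp hdist] at h
      simp at h
  have hMm : M / Q = m := Nat.div_eq_of_eq_mul_right hQ0 hm
  rw [hMm, hsum, hm, Nat.cast_mul, mul_comm (Q : ℤ), Int.gcd_mul_left,
    Int.isCoprime_iff_gcd_eq_one.1 hcop]
  simp

/-- The sum on the right does not involve the cuboid, so all cuboids through `0` give the same
evaluation up to sign. -/
lemma cubEval_eq (hp : ∀ i, (p i).Prime) (hn : ∀ i, 1 ≤ n i)
    (hdist : Function.Injective p) (M : ℕ) [NeZero M] (hM : M = ∏ i, p i ^ n i)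
    (f : ZMod M → ℝ) (hf : IsStepFun M f) (c : ZMod M) (ρ : Fin K → ℕ)
    (hρ : ∀ i, 1 ≤ ρ i ∧ ρ i ≤ p i - 1) (S₀ : Finset (Fin K)) (hS₀ : cubVertex M p c ρ S₀ = 0) :
    cubEval M p c ρ f = (-1) ^ S₀.card *
      ∑ T : Finset (Fin K), (-1 : ℝ) ^ T.card * f ((M / ∏ i ∈ T, p i : ℕ) : ZMod M) := by
  rw [cubEval, Finset.mul_sum]
  refine Fintype.sum_equiv (symmDiff_left_involutive S₀).toPerm _ _ fun S => ?_
  simp only [Function.Involutive.coe_toPerm]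
  rw [← mul_assoc, ← pow_add]
  have hcard : (symmDiff S S₀).card = (S \ S₀).card + (S₀ \ S).card := by
    rw [symmDiff_def]
    exact Finset.card_union_of_disjoint disjoint_sdiff_sdiff
  congr 1
  · have h1 := Finset.card_sdiff_add_card_inter S S₀
    have h2 := Finset.card_sdiff_add_card_inter S₀ S
    rw [Finset.inter_comm] at h2
    have : S₀.card + (symmDiff S S₀).card = S.card + 2 * (S₀ \ S).card := by omega
    rw [this, pow_add, pow_mul]
    simp
  · apply hf
    set t : Fin K → ℤ := fun i => if i ∈ S then (ρ i : ℤ) else -(ρ i : ℤ) with ht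
    have hv : cubVertex M p c ρ S =
        ((∑ i ∈ symmDiff S S₀, t i * ((M / p i : ℕ) : ℤ) : ℤ) : ZMod M) := by
      have e1 : cubVertex M p c ρ S = cubVertex M p c ρ S - cubVertex M p c ρ S₀ := by
        rw [hS₀, sub_zero]
      have e2 : ∑ i ∈ S \ S₀, t i * ((M / p i : ℕ) : ℤ) =
          ∑ i ∈ S \ S₀, ((ρ i * (M / p i) : ℕ) : ℤ) := by
        refine Finset.sum_congr rfl fun i hi => ?_
        rw [ht]
        simp [(mem_sdiff.1 hi).1]
      have e3 : ∑ i ∈ S₀ \ S, t i * ((M / p i : ℕ) : ℤ) =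
          -∑ i ∈ S₀ \ S, ((ρ i * (M / p i) : ℕ) : ℤ) := by
        rw [← Finset.sum_neg_distrib]
        refine Finset.sum_congr rfl fun i hi => ?_
        rw [ht]
        simp [(mem_sdiff.1 hi).2]
      rw [e1, cubVertex, cubVertex, add_sub_add_left_eq_sub, ← Finset.sum_sdiff_sub_sum_sdiff,
        symmDiff_def, Finset.sup_eq_union, Finset.sum_union disjoint_sdiff_sdiff, e2, e3,
        ← sub_eq_add_neg, Int.cast_sub, Int.cast_sum, Int.cast_sum]
      simp only [Int.cast_natCast]
    have htd : ∀ i ∈ symmDiff S S₀, ¬ (p i : ℤ) ∣ t i := by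
      intro i _ h
      have h' : (p i : ℤ) ∣ (ρ i : ℤ) := by
        rw [ht] at h
        simp only at h
        split_ifs at h
        · exact h
        · exact (dvd_neg.1 h)
      have := Nat.le_of_dvd (hρ i).1 (Int.natCast_dvd_natCast.1 h')
      have := hρ i
      have := (hp i).pos
      omega
    have hg := gcd_val_intCast M ((M / ∏ i ∈ symmDiff S S₀, p i : ℕ) : ℤ)
    rw [Int.cast_natCast, Int.gcd_natCast_natCast,
      Nat.gcd_eq_left (Nat.div_dvd_of_dvd (prod_dvd_M hn hM _))] at hg
    rw [hv, gcd_val_intCast, gcd_vertex hp hn hdist hM _ t htd, hg]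

end cuboid

/-- For a step function `f` on `ℤ_M`, `M = ∏ pᵢ^{nᵢ}` with `K ≥ 1`,
the following are equivalent: (I) `f̂` vanishes on `{ξ : gcd(ξ, M) = 1}`
(i.e. `Φ_M | F`); (II) `F[Δ] = 0` for every `M`-cuboid `Δ` with a vertex at `0`;
(III) `F[Δ] = 0` for some `M`-cuboid `Δ` with a vertex at `0`. -/
theorem statement10 (K : ℕ) (hK : 1 ≤ K) (p n : Fin K → ℕ) (hp : ∀ i, (p i).Prime)
    (hn : ∀ i, 1 ≤ n i) (hdist : Function.Injective p)
    (M : ℕ) [NeZero M] (hM : M = ∏ i, p i ^ n i)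
    (f : ZMod M → ℝ) (hf : IsStepFun M f) :
    ((∀ ξ : ZMod M, Nat.gcd ξ.val M = 1 → fhat M f ξ = 0) ↔
      (∀ (c : ZMod M) (ρ : Fin K → ℕ), (∀ i, 1 ≤ ρ i ∧ ρ i ≤ p i - 1) →
        (∃ S₀ : Finset (Fin K), cubVertex M p c ρ S₀ = 0) →
        cubEval M p c ρ f = 0)) ∧
    ((∀ (c : ZMod M) (ρ : Fin K → ℕ), (∀ i, 1 ≤ ρ i ∧ ρ i ≤ p i - 1) →
        (∃ S₀ : Finset (Fin K), cubVertex M p c ρ S₀ = 0) →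
        cubEval M p c ρ f = 0) ↔
      (∃ (c : ZMod M) (ρ : Fin K → ℕ), (∀ i, 1 ≤ ρ i ∧ ρ i ≤ p i - 1) ∧
        (∃ S₀ : Finset (Fin K), cubVertex M p c ρ S₀ = 0) ∧
        cubEval M p c ρ f = 0)) := by
  have hM0 : M ≠ 0 := NeZero.ne M
  set D : ℝ := ∑ T : Finset (Fin K), (-1 : ℝ) ^ T.card * f ((M / ∏ i ∈ T, p i : ℕ) : ZMod M)
    with hD
  have hfD : ∀ ξ : ZMod M, Nat.gcd ξ.val M = 1 → fhat M f ξ = (D : ℂ) := by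
    intro ξ hξ
    rw [fhat_eq M f hf ξ hξ, hD,
      sum_subsets_eq_moebius hp hn hdist hM0 hM (fun m => f (m : ZMod M))]
    push_cast
    rfl
  have hI : (∀ ξ : ZMod M, Nat.gcd ξ.val M = 1 → fhat M f ξ = 0) ↔ D = 0 := by
    constructor
    · intro h
      have h1 : Nat.gcd (1 : ZMod M).val M = 1 := by
        simpa using gcd_val_intCast M 1
      have := h 1 h1
      rw [hfD 1 h1] at this
      exact_mod_cast this
    · intro h ξ hξ
      rw [hfD ξ hξ, h, Complex.ofReal_zero]
  have hII : (∀ (c : ZMod M) (ρ : Fin K → ℕ), (∀ i, 1 ≤ ρ i ∧ ρ i ≤ p i - 1) →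
      (∃ S₀ : Finset (Fin K), cubVertex M p c ρ S₀ = 0) → cubEval M p c ρ f = 0) ↔ D = 0 := by
    constructor
    · intro h
      have hρ : ∀ i, 1 ≤ (fun _ : Fin K => 1) i ∧ (fun _ : Fin K => 1) i ≤ p i - 1 := fun i => by
        have := (hp i).two_le
        constructor <;> simp only <;> omega
      have h0 : cubVertex M p 0 (fun _ => 1) ∅ = 0 := by simp [cubVertex]
      have := h 0 (fun _ => 1) hρ ⟨∅, h0⟩
      rw [cubEval_eq hp hn hdist M hM f hf _ _ hρ ∅ h0, ← hD] at this
      simpa using this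
    · rintro h c ρ hρ ⟨S₀, hS₀⟩
      rw [cubEval_eq hp hn hdist M hM f hf c ρ hρ S₀ hS₀, ← hD, h, mul_zero]
  refine ⟨hI.trans hII.symm, fun h => ?_, ?_⟩
  · have hρ : ∀ i, 1 ≤ (fun _ : Fin K => 1) i ∧ (fun _ : Fin K => 1) i ≤ p i - 1 := fun i => by
      have := (hp i).two_le
      constructor <;> simp only <;> omega
    have h0 : ∃ S₀, cubVertex M p 0 (fun _ => 1) S₀ = 0 := ⟨∅, by simp [cubVertex]⟩
    exact ⟨0, fun _ => 1, hρ, h0, h 0 _ hρ h0⟩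
  · rintro ⟨c, ρ, hρ, ⟨S₀, hS₀⟩, h⟩
    rw [cubEval_eq hp hn hdist M hM f hf c ρ hρ S₀ hS₀, ← hD] at h
    exact hII.2 ((mul_eq_zero.1 h).resolve_left (pow_ne_zero _ (by norm_num)))
end

section
/- Let A ⊆ ℤ_M be nonempty and let h_A be the averaged autocorrelation function of A. Then ĥ_A(ξ) is real and nonnegative for every ξ ∈ ℤ_M, and for every ξ with ĥ_A(ξ) ≠ 0 we have ĥ_A(ξ) ≥ 1/(|A|·φ(M)) ≥ 1/(M·φ(M)). -/
/-!
Write `ψ` for the standard additive character of `ZMod M`. Since the Fourier transform turns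
convolutions into products, `ĥ_A(ξ) = (|A| φ(M))⁻¹ · S` with
`S = ∑_{r unit} |∑_{a ∈ A} ψ(r a ξ)|²`, which gives reality and nonnegativity
(`fhat_hAfun`). Expanding the square and exchanging sums, `S` is a sum over `a, b ∈ A` of the
Ramanujan sums `∑_{r unit} ψ(r (b - a) ξ)`. Each of these is a rational integer
(`ramanujan_int`): Möbius inversion writes it as an integral combination of sums of a character
over subgroups, each being `0` or the order of the subgroup. So `S` is a nonnegative integer,
hence at least `1` as soon as it is nonzero.
-/

open Finset

lemma fhat_eq_s13 (M : ℕ) [NeZero M] (f : ZMod M → ℝ) (ξ : ZMod M) :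
    fhat M f ξ = ∑ z : ZMod M, (f z : ℂ) * ZMod.stdAddChar (-(z * ξ)) := by
  unfold fhat
  refine Finset.sum_congr rfl fun z _ => ?_
  have h : -(z * ξ) = ((-((z.val : ℤ) * (ξ.val : ℤ)) : ℤ) : ZMod M) := by
    push_cast
    simp
  rw [h, ZMod.stdAddChar_coe]
  congr 2
  push_cast
  ring

/-- A character sum over the subgroup of multiples of a divisor `d` of `M` is `0` or the order of
the subgroup. The subgroup is encoded as the kernel of the reduction `ZMod M → ZMod d`. -/
lemma sum_dvd_int (M : ℕ) [NeZero M] (ψ : AddChar (ZMod M) ℂ) (d : ℕ) (hd : d ∣ M) :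
    ∃ n : ℤ, ∑ r ∈ univ.filter (fun r : ZMod M => d ∣ r.val), ψ r = n := by
  classical
  let K : AddSubgroup (ZMod M) := (ZMod.castHom hd (ZMod d)).toAddMonoidHom.ker
  have hK : ∀ r : ZMod M, r ∈ K ↔ d ∣ r.val := by
    intro r
    rw [← ZMod.natCast_eq_zero_iff]
    change ZMod.castHom hd (ZMod d) r = 0 ↔ _
    rw [ZMod.castHom_apply, ZMod.cast_eq_val]
  have h1 : ∑ r ∈ univ.filter (fun r : ZMod M => d ∣ r.val), ψ r
      = ∑ k : K, (ψ.compAddMonoidHom K.subtype) k := by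
    rw [Finset.sum_subtype (p := fun r => r ∈ K) _ (fun x => by simp [hK])]
    rfl
  rw [h1, AddChar.sum_eq_ite]
  split_ifs
  · exact ⟨Fintype.card K, by simp⟩
  · exact ⟨0, by simp⟩

lemma ramanujan_int (M : ℕ) [NeZero M] (ψ : AddChar (ZMod M) ℂ) :
    ∃ n : ℤ, ∑ r ∈ univ.filter (fun r : ZMod M => Nat.gcd r.val M = 1), ψ r = n := by
  have hM : M ≠ 0 := NeZero.ne M
  choose! n hn using sum_dvd_int M ψ
  refine ⟨∑ d ∈ M.divisors, ArithmeticFunction.moebius d * n d, ?_⟩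
  push_cast
  -- Möbius inversion: the indicator of `gcd r M = 1` is `∑ μ(d)` over the common divisors `d`.
  have key : ∀ r : ZMod M, (if Nat.gcd r.val M = 1 then (1 : ℂ) else 0)
      = ∑ d ∈ M.divisors, if d ∣ r.val then ((ArithmeticFunction.moebius d : ℤ) : ℂ) else 0 := by
    intro r
    have h2 : ∑ d ∈ (Nat.gcd r.val M).divisors, ArithmeticFunction.moebius d
        = if Nat.gcd r.val M = 1 then 1 else 0 := by
      rw [← ArithmeticFunction.coe_mul_zeta_apply, ArithmeticFunction.moebius_mul_coe_zeta,
        ArithmeticFunction.one_apply]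
    rw [← Finset.sum_filter]
    have h3 : M.divisors.filter (fun d => d ∣ r.val) = (Nat.gcd r.val M).divisors := by
      ext d
      simp [Nat.dvd_gcd_iff, hM, and_comm]
    rw [h3]
    exact_mod_cast h2.symm
  calc ∑ r ∈ univ.filter (fun r : ZMod M => Nat.gcd r.val M = 1), ψ r
      = ∑ r : ZMod M, (if Nat.gcd r.val M = 1 then (1 : ℂ) else 0) * ψ r := by
        rw [Finset.sum_filter]
        exact Finset.sum_congr rfl fun r _ => by split_ifs <;> simp
    _ = ∑ d ∈ M.divisors, ∑ r : ZMod M,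
          (if d ∣ r.val then ((ArithmeticFunction.moebius d : ℤ) : ℂ) else 0) * ψ r := by
        simp_rw [key, Finset.sum_mul]
        exact Finset.sum_comm
    _ = _ := by
        refine Finset.sum_congr rfl fun d hd => ?_
        rw [← hn d (Nat.dvd_of_mem_divisors hd), Finset.mul_sum, Finset.sum_filter]
        exact Finset.sum_congr rfl fun r _ => by split_ifs <;> simp

lemma fhat_conv (M : ℕ) [NeZero M] (f g : ZMod M → ℝ) (ξ : ZMod M) :
    fhat M (conv M f g) ξ = fhat M f ξ * fhat M g ξ := by
  simp only [fhat_eq_s13, conv]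
  push_cast
  simp_rw [Finset.sum_mul]
  rw [Finset.sum_comm]
  refine Finset.sum_congr rfl fun y _ => ?_
  rw [Finset.mul_sum, ← Equiv.sum_comp (Equiv.addRight y)]
  refine Finset.sum_congr rfl fun w _ => ?_
  simp only [Equiv.coe_addRight, add_sub_cancel_right]
  rw [show -((w + y) * ξ) = -(y * ξ) + -(w * ξ) by ring, AddChar.map_add_eq_mul]
  ring

lemma fhat_image (M : ℕ) [NeZero M] (A : Finset (ZMod M)) (c ξ : ZMod M) (hc : IsUnit c) :
    fhat M (fun x => if x ∈ A.image (fun a => c * a) then (1 : ℝ) else 0) ξ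
      = ∑ a ∈ A, ZMod.stdAddChar (-(c * a * ξ)) := by
  rw [fhat_eq_s13]
  have h : ∀ z : ZMod M, (((if z ∈ A.image (fun a => c * a) then (1 : ℝ) else 0) : ℝ) : ℂ)
      * ZMod.stdAddChar (-(z * ξ))
      = if z ∈ A.image (fun a => c * a) then ZMod.stdAddChar (-(z * ξ)) else 0 := by
    intro z
    split_ifs <;> simp
  simp_rw [h]
  rw [Finset.sum_ite_mem, Finset.univ_inter, Finset.sum_image]
  intro a _ b _ hab
  exact hc.mul_left_cancel hab

lemma isUnit_of_gcd (M : ℕ) [NeZero M] (r : ZMod M) (h : Nat.gcd r.val M = 1) : IsUnit r := by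
  rw [← ZMod.natCast_zmod_val r]
  exact (ZMod.isUnit_iff_coprime _ _).2 h

lemma fhat_hAfun (M : ℕ) [NeZero M] (A : Finset (ZMod M)) (ξ : ZMod M) :
    fhat M (hAfun M A) ξ = ((1 / ((A.card : ℝ) * (Nat.totient M : ℝ)) *
      ∑ r ∈ univ.filter (fun r : ZMod M => Nat.gcd r.val M = 1),
        Complex.normSq (∑ a ∈ A, ZMod.stdAddChar (r * a * ξ)) : ℝ) : ℂ) := by
  have h1 : fhat M (hAfun M A) ξ = ((1 / ((A.card : ℝ) * (Nat.totient M : ℝ)) : ℝ) : ℂ) *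
      ∑ r ∈ univ.filter (fun r : ZMod M => Nat.gcd r.val M = 1),
        fhat M (conv M (fun x => if x ∈ A.image (fun a => r * a) then (1 : ℝ) else 0)
             (fun x => if x ∈ A.image (fun a => -(r * a)) then (1 : ℝ) else 0)) ξ := by
    simp only [fhat, hAfun, Complex.ofReal_mul, Complex.ofReal_sum]
    rw [Finset.sum_comm, Finset.mul_sum]
    exact Finset.sum_congr rfl fun z _ => by rw [mul_assoc, Finset.sum_mul]
  rw [h1, Complex.ofReal_mul, Complex.ofReal_sum]
  congr 1
  refine Finset.sum_congr rfl fun r hr => ?_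
  have hu := isUnit_of_gcd M r (Finset.mem_filter.1 hr).2
  rw [fhat_conv, fhat_image M A r ξ hu]
  simp_rw [← neg_mul]
  rw [fhat_image M A (-r) ξ hu.neg, Complex.normSq_eq_conj_mul_self, map_sum]
  simp_rw [← AddChar.map_neg_eq_conj, neg_mul, neg_neg]

lemma sum_normSq_int (M : ℕ) [NeZero M] (A : Finset (ZMod M)) (ξ : ZMod M) :
    ∃ n : ℤ, ∑ r ∈ univ.filter (fun r : ZMod M => Nat.gcd r.val M = 1),
        Complex.normSq (∑ a ∈ A, ZMod.stdAddChar (r * a * ξ)) = n := by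
  have h := fun x : ZMod M => ramanujan_int M (AddChar.mulShift ZMod.stdAddChar x)
  choose n hn using h
  refine ⟨∑ a ∈ A, ∑ b ∈ A, n ((b - a) * ξ), ?_⟩
  apply Complex.ofReal_injective
  push_cast
  simp_rw [← hn, Complex.normSq_eq_conj_mul_self, map_sum, ← AddChar.map_neg_eq_conj,
    Finset.sum_mul_sum]
  rw [Finset.sum_comm]
  refine Finset.sum_congr rfl fun a _ => ?_
  rw [Finset.sum_comm]
  refine Finset.sum_congr rfl fun b _ => Finset.sum_congr rfl fun r _ => ?_
  rw [AddChar.mulShift_apply, ← AddChar.map_add_eq_mul]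
  congr 1
  ring

/-- For nonempty `A ⊆ ℤ_M`, the Fourier transform of the averaged
autocorrelation `h_A` is real and nonnegative, and every nonzero value of `ĥ_A`
is at least `1/(|A|·φ(M)) ≥ 1/(M·φ(M))`. -/
theorem statement13 (M : ℕ) [NeZero M] (A : Finset (ZMod M)) (hA : A.Nonempty) :
    (∀ ξ : ZMod M, (fhat M (hAfun M A) ξ).im = 0 ∧ 0 ≤ (fhat M (hAfun M A) ξ).re) ∧
    (∀ ξ : ZMod M, fhat M (hAfun M A) ξ ≠ 0 →
      1 / ((A.card : ℝ) * (Nat.totient M : ℝ)) ≤ (fhat M (hAfun M A) ξ).re) ∧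
    1 / ((M : ℝ) * (Nat.totient M : ℝ)) ≤ 1 / ((A.card : ℝ) * (Nat.totient M : ℝ)) := by
  have hM : 0 < M := Nat.pos_of_neZero M
  have hφ : (0 : ℝ) < Nat.totient M := by exact_mod_cast Nat.totient_pos.2 hM
  have hc : (0 : ℝ) < A.card := by exact_mod_cast hA.card_pos
  have hcM : (A.card : ℝ) ≤ M := by
    have := A.card_le_univ
    rw [ZMod.card] at this
    exact_mod_cast this
  have hpos : 0 < 1 / ((A.card : ℝ) * (Nat.totient M : ℝ)) := by positivity
  have hS : ∀ ξ : ZMod M, 0 ≤ ∑ r ∈ univ.filter (fun r : ZMod M => Nat.gcd r.val M = 1),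
      Complex.normSq (∑ a ∈ A, ZMod.stdAddChar (r * a * ξ)) := fun ξ =>
    Finset.sum_nonneg fun r _ => Complex.normSq_nonneg _
  refine ⟨fun ξ => ?_, fun ξ hξ => ?_, ?_⟩
  · rw [fhat_hAfun]
    exact ⟨Complex.ofReal_im _, by rw [Complex.ofReal_re]; exact mul_nonneg hpos.le (hS ξ)⟩
  · rw [fhat_hAfun] at hξ ⊢
    rw [Complex.ofReal_re]
    obtain ⟨n, hn⟩ := sum_normSq_int M A ξ
    have h0 := hS ξ
    rw [hn] at hξ h0 ⊢
    have hn0 : n ≠ 0 := by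
      rintro rfl
      simp at hξ
    have hn1 : (1 : ℤ) ≤ n := by
      have : (0 : ℤ) ≤ n := by exact_mod_cast h0
      omega
    exact le_mul_of_one_le_right hpos.le (by exact_mod_cast hn1)
  · gcongr
end

section
/- Suppose A ⊕ B = ℤ_M is a tiling. Then the function f = (1/|B|)·(1_B * 1_{−B}) satisfies f(0) = 1, f ≥ 0, f̂ ≥ 0, and 1_A * f = 1_{ℤ_M}; in particular, A pd-tiles ℤ_M. -/
/-!
Writing `f = |B|⁻¹ ∑_{b, b' ∈ B} δ_{b - b'}` makes every claim a short computation. Evaluating at `0`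
picks out the diagonal `b = b'`. For a character `χ`, the transform is
`|B|⁻¹ ∑_{b, b'} χ(b - b') = |B|⁻¹ |∑_b χ(b)|²`. Finally `(1_A * f)(x)` is the average over `b' ∈ B`
of the number of representations `x + b' = a + b`, and the tiling property says that each of these
numbers is `1`.
-/

open Finset

/-- The kernel of `fhat` is the standard additive character of `ZMod M` evaluated at `-(z * ξ)`,
which is where it becomes visible that it depends on `z` only modulo `M`. -/
lemma exp_eq_stdAddChar (M : ℕ) [NeZero M] (z ξ : ZMod M) :
    Complex.exp (-2 * Real.pi * Complex.I * ((z.val : ℂ) * (ξ.val : ℂ)) / (M : ℂ)) =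
      ZMod.stdAddChar (-(z * ξ)) := by
  have h : -(z * ξ) = ((-((z.val : ℤ) * (ξ.val : ℤ)) : ℤ) : ZMod M) := by
    push_cast
    simp
  rw [h, ZMod.stdAddChar_coe]
  congr 1
  push_cast
  ring

/-- `1_B * 1_{-B}` counts the representations of a point as a difference of elements of `B`. -/
lemma conv_self_neg (M : ℕ) [NeZero M] (B : Finset (ZMod M)) (z : ZMod M) :
    conv M (fun x => if x ∈ B then (1 : ℝ) else 0)
        (fun x => if x ∈ B.image (fun b => -b) then (1 : ℝ) else 0) z =
      ∑ b' ∈ B, ∑ b ∈ B, if b - b' = z then (1 : ℝ) else 0 := by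
  have h2 : ∀ b b' : ZMod M, b - b' = z ↔ b - z = b' := fun b b' =>
    ⟨fun h => by rw [← h]; abel, fun h => by rw [← h]; abel⟩
  have h1 : ∀ y : ZMod M, z - y ∈ B.image (fun b => -b) ↔ y - z ∈ B := fun y => by
    rw [← neg_sub y z, Finset.mem_image]
    simp only [neg_inj, exists_eq_right]
  rw [Finset.sum_comm]
  simp only [conv, h1, h2, Finset.sum_ite_eq, ite_mul, one_mul, zero_mul]
  rw [Finset.sum_ite_mem, Finset.univ_inter]

lemma IsTiling.sum_eq_one {M : ℕ} [NeZero M] {A B : Finset (ZMod M)} (h : IsTiling M A B)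
    (z : ZMod M) : ∑ a ∈ A, ∑ b ∈ B, (if a + b = z then (1 : ℝ) else 0) = 1 := by
  obtain ⟨p, ⟨hA, hB, hz⟩, hu⟩ := h z
  rw [← Finset.sum_product' A B (fun a b => if a + b = z then (1 : ℝ) else 0),
    Finset.sum_eq_single p]
  · simp [hz]
  · intro q hq hne
    rw [Finset.mem_product] at hq
    exact if_neg fun hz' => hne (hu q ⟨hq.1, hq.2, hz'⟩)
  · intro hp
    exact absurd (Finset.mem_product.2 ⟨hA, hB⟩) hp

/-- If `A ⊕ B = ℤ_M` is a tiling, then `f = (1/|B|)·(1_B ∗ 1_{−B})`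
satisfies `f(0) = 1`, `f ≥ 0`, `f̂ ≥ 0` and `1_A ∗ f = 1_{ℤ_M}`; in particular `A`
pd-tiles `ℤ_M`. -/
theorem statement16 (M : ℕ) [NeZero M] (A B : Finset (ZMod M))
    (htile : IsTiling M A B) (f : ZMod M → ℝ)
    (hfdef : f = fun z => (1 / (B.card : ℝ)) *
      conv M (fun x => if x ∈ B then (1 : ℝ) else 0)
             (fun x => if x ∈ B.image (fun b => -b) then (1 : ℝ) else 0) z) :
    f 0 = 1 ∧ (∀ z, 0 ≤ f z) ∧
    (∀ ξ, (fhat M f ξ).im = 0 ∧ 0 ≤ (fhat M f ξ).re) ∧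
    (∀ x, conv M (fun z => if z ∈ A then (1 : ℝ) else 0) f x = 1) ∧
    (∃ g : ZMod M → ℝ, g 0 = 1 ∧ (∀ z, 0 ≤ g z) ∧
      (∀ ξ, (fhat M g ξ).im = 0 ∧ 0 ≤ (fhat M g ξ).re) ∧
      (∀ x, conv M (fun z => if z ∈ A then (1 : ℝ) else 0) g x = 1)) := by
  have hB : (B.card : ℝ) ≠ 0 := by
    obtain ⟨p, ⟨-, hp, -⟩, -⟩ := htile 0
    exact_mod_cast Finset.card_ne_zero_of_mem hp
  have hf : ∀ z, f z = (1 / (B.card : ℝ)) *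
      ∑ b' ∈ B, ∑ b ∈ B, if b - b' = z then (1 : ℝ) else 0 := fun z => by
    rw [hfdef, ← conv_self_neg]
  have h0 : f 0 = 1 := by
    rw [hf]
    simp [sub_eq_zero, hB]
  have hnn : ∀ z, 0 ≤ f z := fun z => by
    rw [hf]
    positivity
  have hhat : ∀ ξ, fhat M f ξ = (((1 / (B.card : ℝ)) *
      Complex.normSq (∑ b ∈ B, ZMod.stdAddChar (-(b * ξ))) : ℝ) : ℂ) := fun ξ => by
    have key : ∀ b b' : ZMod M, (ZMod.stdAddChar (-((b - b') * ξ)) : ℂ) =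
        ZMod.stdAddChar (-(b * ξ)) * (starRingEnd ℂ) (ZMod.stdAddChar (-(b' * ξ))) := by
      intro b b'
      rw [← AddChar.map_neg_eq_conj, ← AddChar.map_add_eq_mul]
      congr 1
      ring
    calc fhat M f ξ = ∑ z, (1 / (B.card : ℂ)) * ∑ b' ∈ B, ∑ b ∈ B,
          if b - b' = z then (ZMod.stdAddChar (-(z * ξ)) : ℂ) else 0 := by
          unfold fhat
          refine Finset.sum_congr rfl fun z _ => ?_
          rw [exp_eq_stdAddChar, hf]
          push_cast
          simp only [mul_assoc, Finset.sum_mul, apply_ite Complex.ofReal, Complex.ofReal_one,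
            Complex.ofReal_zero, ite_mul, one_mul, zero_mul]
      _ = (1 / (B.card : ℂ)) * ∑ b' ∈ B, ∑ b ∈ B, (ZMod.stdAddChar (-((b - b') * ξ)) : ℂ) := by
          rw [← Finset.mul_sum, Finset.sum_comm]
          congr 1
          refine Finset.sum_congr rfl fun b' _ => ?_
          rw [Finset.sum_comm]
          simp
      _ = _ := by
          push_cast
          rw [Complex.normSq_eq_conj_mul_self, map_sum, Finset.sum_mul_sum]
          simp only [key, mul_comm (ZMod.stdAddChar _ : ℂ) (starRingEnd ℂ _)]
  have hpos : ∀ ξ, (fhat M f ξ).im = 0 ∧ 0 ≤ (fhat M f ξ).re := fun ξ => by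
    rw [hhat, Complex.ofReal_im, Complex.ofReal_re]
    exact ⟨rfl, mul_nonneg (by positivity) (Complex.normSq_nonneg _)⟩
  have hconv : ∀ x, conv M (fun z => if z ∈ A then (1 : ℝ) else 0) f x = 1 := fun x => by
    have h1 : ∀ a b b' : ZMod M, b - b' = x - a ↔ a + b = x + b' := fun a b b' => by
      rw [sub_eq_sub_iff_add_eq_add, add_comm b a]
    calc conv M (fun z => if z ∈ A then (1 : ℝ) else 0) f x
        = ∑ a ∈ A, (1 / (B.card : ℝ)) *
            ∑ b' ∈ B, ∑ b ∈ B, if a + b = x + b' then (1 : ℝ) else 0 := by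
          simp [conv, hf, h1]
      _ = (1 / (B.card : ℝ)) *
            ∑ b' ∈ B, ∑ a ∈ A, ∑ b ∈ B, if a + b = x + b' then (1 : ℝ) else 0 := by
          rw [← Finset.mul_sum, Finset.sum_comm]
      _ = 1 := by
          simp only [htile.sum_eq_one]
          simp [hB]
  exact ⟨h0, hnn, hpos, hconv, f, h0, hnn, hpos, hconv⟩
end

section
/- Let H ⊆ ℤ_M be a union of step classes containing 0, with standard complement H′. Then ω(H)·ω(H′) ≤ M. -/
/-!
If `A` has all its differences in `H` and `B` has all its differences in `Hᶜ ∪ {0}`, then the map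
`(a, b) ↦ a + b` is injective on `A × B`: from `a + b = a' + b'` one gets `a - a' = b' - b`, an
element of `H ∩ (Hᶜ ∪ {0}) ⊆ {0}`. Hence `|A| * |B| ≤ |ℤ_M| = M`. Applying this to sets attaining
the two clique numbers (`exists_clique_card_eq`) gives the bound.
-/

open Finset

/-- The supremum defining the clique number is attained: the cardinalities of cliques form a
nonempty set (it contains `0`) that is bounded above by `M`. -/
theorem exists_clique_card_eq (M : ℕ) [NeZero M] (H : Set (ZMod M)) :
    ∃ C : Finset (ZMod M), (∀ x ∈ C, ∀ y ∈ C, x - y ∈ H) ∧ C.card = cliqueNum M H := by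
  refine Nat.sSup_mem (s := {n | ∃ C : Finset (ZMod M),
    (∀ x ∈ C, ∀ y ∈ C, x - y ∈ H) ∧ C.card = n}) ⟨0, ∅, by simp, rfl⟩ ⟨M, ?_⟩
  rintro n ⟨C, -, rfl⟩
  simpa [ZMod.card] using C.card_le_univ

/-- For `H ⊆ ℤ_M` a union of step classes containing `0`, with
standard complement `H' = Hᶜ ∪ {0}`, we have `ω(H)·ω(H') ≤ M`. -/
theorem statement17 (M : ℕ) [NeZero M] (H : Set (ZMod M))
    (hstep : IsStepSet M H) (h0 : (0 : ZMod M) ∈ H) :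
    cliqueNum M H * cliqueNum M (Hᶜ ∪ {0}) ≤ M := by
  obtain ⟨A, hA, hAc⟩ := exists_clique_card_eq M H
  obtain ⟨B, hB, hBc⟩ := exists_clique_card_eq M (Hᶜ ∪ {0})
  rw [← hAc, ← hBc, ← card_product]
  have hinj : Set.InjOn (fun p : ZMod M × ZMod M => p.1 + p.2) (A ×ˢ B : Finset _) := by
    rintro ⟨a, b⟩ hab ⟨a', b'⟩ hab' h
    simp only [coe_product, Set.mem_prod, mem_coe] at hab hab' h
    have hd : a - a' = b' - b := by linear_combination h
    have ha : a - a' = 0 := by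
      rcases hB b' hab'.2 b hab.2 with hn | hz
      · exact absurd (hd ▸ hA a hab.1 a' hab'.1) hn
      · exact hd.trans hz
    have hb : b' - b = 0 := hd ▸ ha
    exact Prod.ext (sub_eq_zero.mp ha) (sub_eq_zero.mp hb).symm
  rw [← card_image_of_injOn hinj]
  simpa [ZMod.card] using
    (image (fun p : ZMod M × ZMod M => p.1 + p.2) (A ×ˢ B)).card_le_univ
end

section
/- Let M = p^n·q^m with p ≠ q primes and n, m ≥ 1, let f : ℤ_M → ℝ be a step function, and let N be a divisor of M with pq | N. Define f_N : ℤ_N → ℝ by f_N(z) = ∑_{y ∈ ℤ_M, y ≡ z (mod N)} f(y). Then Φ_N divides the mask polynomial F of f (i.e., f̂(ξ) = 0 for all ξ ∈ R_{M/N}) if and only if f_N(0) − f_N(N/p) − f_N(N/q) + f_N(N/(pq)) = 0. -/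
/-!
For `gcd(ξ, M) = M / N` write `ζ = exp(-2πiξ/M)`, a primitive `N`-th root of unity. Grouping the
terms of `f̂(ξ) = ∑ f(z) ζ^z` by residue mod `N` gives `f̂(ξ) = ∑_{w mod N} f_N(w) ζ^w`. Units mod
`N` lift to units mod `M`, so `f_N` inherits from `f` that it depends only on `gcd(w, N)`. As `w`
runs over the residues with `gcd(w, N) = N / d`, the power `ζ^w` runs over the primitive `d`-th
roots of unity, whose sum is `μ(d)`. Hence
`f̂(ξ) = ∑_{d ∣ N} μ(d) f_N(N / d)` (`fhat_eq_sum_moebius`), and since only `p` and `q` divide `N`,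
the nonzero terms are those with `d = 1, p, q, pq`. So `f̂` is constant on `R_{M/N}` with value
the alternating sum of the theorem, and the equivalence follows because `R_{M/N}` is nonempty.
-/

open Finset

/-! ### Sums of primitive roots of unity -/

/-- The sum of the primitive `d`-th roots of unity is `μ(d)`: Möbius inversion of the fact that
all `d`-th roots of unity sum to `0` unless `d = 1`. -/
lemma sum_primitiveRoots_eq_moebius (d : ℕ) (hd : 0 < d) :
    ∑ η ∈ primitiveRoots d ℂ, η = (ArithmeticFunction.moebius d : ℂ) := by
  classical
  have key : ∀ k > 0, ∑ i ∈ k.divisors, (∑ η ∈ primitiveRoots i ℂ, η)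
      = if k = 1 then (1 : ℂ) else 0 := by
    intro k hk
    have : NeZero k := ⟨hk.ne'⟩
    rw [← Finset.sum_biUnion (fun i _ j _ hij => IsPrimitiveRoot.disjoint hij),
      ← IsPrimitiveRoot.nthRoots_one_eq_biUnion_primitiveRoots]
    have hζ := Complex.isPrimitiveRoot_exp k hk.ne'
    split_ifs with h1
    · subst h1
      simp [IsPrimitiveRoot.nthRoots_one_eq_biUnion_primitiveRoots]
    · rw [← hζ.geom_sum_eq_zero (by omega)]
      symm
      refine Finset.sum_bij (fun i _ => Complex.exp (2 * Real.pi * Complex.I / k) ^ i) ?_ ?_ ?_ ?_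
      · intro i _
        rw [Polynomial.mem_nthRootsFinset hk, pow_right_comm, hζ.pow_eq_one, one_pow]
      · intro i hi j hj h
        exact hζ.pow_inj (Finset.mem_range.1 hi) (Finset.mem_range.1 hj) h
      · intro η hη
        obtain ⟨i, hi, h⟩ := hζ.eq_pow_of_pow_eq_one
          ((Polynomial.mem_nthRootsFinset hk _).1 hη)
        exact ⟨i, Finset.mem_range.2 hi, h⟩
      · intro i _
        rfl
  rw [← ArithmeticFunction.sum_eq_iff_sum_mul_moebius_eq.1 key d hd,
    Finset.sum_eq_single (d, 1)]
  · simp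
  · rintro ⟨a, b⟩ hab hne
    rw [Nat.mem_divisorsAntidiagonal] at hab
    have : b ≠ 1 := by
      rintro rfl
      exact hne (by simp_all)
    simp [this]
  · intro h
    exact absurd (Nat.mem_divisorsAntidiagonal.2 ⟨mul_one d, hd.ne'⟩) h

/-- For `ζ` a primitive `N`-th root of unity, `w ↦ ζ ^ w` maps the step class `R_{N/d}` of `ℤ_N`
bijectively onto the primitive `d`-th roots of unity. -/
lemma sum_pow_stepClass (N : ℕ) [NeZero N] (ζ : ℂ) (hζ : IsPrimitiveRoot ζ N) (d : ℕ)
    (hd : d ∣ N) :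
    ∑ w : ZMod N with Nat.gcd w.val N = N / d, ζ ^ w.val
      = (ArithmeticFunction.moebius d : ℂ) := by
  have hN : 0 < N := NeZero.pos N
  have hd0 : 0 < d := Nat.pos_of_dvd_of_pos hd hN
  have hord : ∀ i : ℕ, orderOf (ζ ^ i) = N / Nat.gcd N i := by
    intro i
    have hfin : IsOfFinOrder ζ := isOfFinOrder_iff_pow_eq_one.2 ⟨N, hN, hζ.pow_eq_one⟩
    rw [hfin.orderOf_pow, ← hζ.eq_orderOf]
  rw [← sum_primitiveRoots_eq_moebius d hd0]
  refine Finset.sum_bij (fun w _ => ζ ^ w.val) ?_ ?_ ?_ ?_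
  · intro w hw
    rw [Finset.mem_filter] at hw
    rw [mem_primitiveRoots hd0, IsPrimitiveRoot.iff_orderOf, hord, Nat.gcd_comm, hw.2,
      Nat.div_div_self hd hN.ne']
  · intro w _ w' _ h
    exact ZMod.val_injective N (hζ.pow_inj (ZMod.val_lt w) (ZMod.val_lt w') h)
  · intro η hη
    rw [mem_primitiveRoots hd0] at hη
    obtain ⟨i, hi, rfl⟩ := hζ.eq_pow_of_pow_eq_one
      (hη.pow_eq_one_iff_dvd N |>.2 hd)
    have h1 := hη.eq_orderOf
    rw [hord] at h1
    refine ⟨(i : ZMod N), ?_, ?_⟩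
    · rw [Finset.mem_filter, ZMod.val_cast_of_lt hi]
      refine ⟨Finset.mem_univ _, ?_⟩
      rw [h1, Nat.div_div_self (Nat.gcd_dvd_left N i) hN.ne', Nat.gcd_comm]
    · simp only [ZMod.val_cast_of_lt hi]
  · intro w _
    rfl

/-! ### Pushforward of step functions to `ℤ_N` -/

lemma gcd_val_unit_mul (M : ℕ) [NeZero M] (u : (ZMod M)ˣ) (y : ZMod M) :
    Nat.gcd ((u : ZMod M) * y).val M = Nat.gcd y.val M := by
  rw [ZMod.val_mul, ← Nat.gcd_rec, Nat.gcd_comm]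
  exact Nat.Coprime.gcd_mul_left_cancel _ (ZMod.val_coe_unit_coprime u)

/-- Pushing forward to `ℤ_N` preserves invariance under units, because units mod `N` lift to
units mod `M`. -/
lemma fN_unit_mul (M : ℕ) [NeZero M] (f : ZMod M → ℝ) (hf : IsStepFun M f) (N : ℕ)
    (hNM : N ∣ M) (u : (ZMod N)ˣ) (z : ZMod N) :
    fN M f N ((u : ZMod N) * z) = fN M f N z := by
  obtain ⟨v, rfl⟩ := ZMod.unitsMap_surjective hNM u
  have hcast : ∀ y : ZMod M, ((y.val : ℕ) : ZMod N) = ZMod.castHom hNM (ZMod N) y := by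
    intro y
    rw [ZMod.natCast_val, ZMod.castHom_apply]
  have hv : ((ZMod.unitsMap hNM v : (ZMod N)ˣ) : ZMod N)
      = ZMod.castHom hNM (ZMod N) (v : ZMod M) := rfl
  unfold fN
  symm
  refine Finset.sum_equiv v.mulLeft ?_ ?_
  · intro y
    simp only [Finset.mem_filter, Finset.mem_univ, true_and, hcast, Units.mulLeft_apply, map_mul,
      ← hv]
    exact (Units.mul_right_inj _).symm
  · intro y _
    exact hf _ _ (gcd_val_unit_mul M v y).symm

/-- Every residue is a unit times its gcd with `N`. -/
lemma fN_eq_gcd (M : ℕ) [NeZero M] (f : ZMod M → ℝ) (hf : IsStepFun M f) (N : ℕ) [NeZero N]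
    (hNM : N ∣ M) (z : ZMod N) :
    fN M f N z = fN M f N ((Nat.gcd z.val N : ℕ) : ZMod N) := by
  obtain ⟨d, hd, u, hu, rfl⟩ := ZMod.eq_unit_mul_divisor z
  obtain ⟨v, rfl⟩ := hu
  rw [gcd_val_unit_mul, fN_unit_mul M f hf N hNM, ZMod.val_natCast, ← Nat.gcd_rec, Nat.gcd_comm,
    Nat.gcd_eq_left hd]

/-! ### The Fourier transform on a step class -/

lemma fhat_eq_sum_fN (M : ℕ) [NeZero M] (f : ZMod M → ℝ) (N : ℕ) [NeZero N]
    (hNM : N ∣ M) (ξ : ZMod M) (hξ : Nat.gcd ξ.val M = M / N) :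
    ∃ ζ : ℂ, IsPrimitiveRoot ζ N ∧
      fhat M f ξ = ∑ w : ZMod N, (fN M f N w : ℂ) * ζ ^ w.val := by
  have hM : 0 < M := NeZero.pos M
  have hg : 0 < Nat.gcd ξ.val M := Nat.gcd_pos_of_pos_right _ hM
  -- with `g = gcd(ξ, M)`, the frequency is `ξ = g * a` and `M = g * N`, where `gcd(a, N) = 1`
  obtain ⟨a, ha⟩ := Nat.gcd_dvd_left ξ.val M
  have hMN : M = Nat.gcd ξ.val M * N := by
    rw [hξ, Nat.div_mul_cancel hNM]
  have hcop : Nat.Coprime a N := by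
    have h := Nat.coprime_div_gcd_div_gcd hg
    rwa [Nat.div_eq_of_eq_mul_right hg ha, Nat.div_eq_of_eq_mul_right hg hMN] at h
  have hζ := (Complex.isPrimitiveRoot_exp_of_coprime a N (NeZero.ne N) hcop).inv
  refine ⟨_, hζ, ?_⟩
  set ζ := (Complex.exp (2 * Real.pi * Complex.I * (a / N)))⁻¹ with hζdef
  have hterm : ∀ z : ZMod M, (f z : ℂ) *
      Complex.exp (-2 * Real.pi * Complex.I * ((z.val : ℂ) * (ξ.val : ℂ)) / (M : ℂ))
      = (f z : ℂ) * ζ ^ ((z.val : ℕ) : ZMod N).val := by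
    intro z
    have h1 : ζ ^ ((z.val : ℕ) : ZMod N).val = ζ ^ z.val := by
      rw [ZMod.val_natCast]
      exact pow_eq_pow_of_modEq (Nat.mod_modEq _ _) hζ.pow_eq_one
    rw [h1, hζdef, ← Complex.exp_neg, ← Complex.exp_nat_mul]
    congr 2
    have h2 : (ξ.val : ℂ) = (Nat.gcd ξ.val M : ℂ) * a := by exact_mod_cast ha
    have h3 : (M : ℂ) = (Nat.gcd ξ.val M : ℂ) * N := by exact_mod_cast hMN
    have h4 : (Nat.gcd ξ.val M : ℂ) ≠ 0 := by exact_mod_cast hg.ne'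
    have h5 : (N : ℂ) ≠ 0 := by exact_mod_cast NeZero.ne N
    rw [h2, h3]
    field_simp
  unfold fhat fN
  rw [Finset.sum_congr rfl (fun z _ => hterm z),
    ← Finset.sum_fiberwise Finset.univ (fun z : ZMod M => ((z.val : ℕ) : ZMod N))]
  refine Finset.sum_congr rfl fun w _ => ?_
  rw [Complex.ofReal_sum, Finset.sum_mul]
  refine Finset.sum_congr rfl fun z hz => ?_
  rw [(Finset.mem_filter.1 hz).2]

/-- On the step class `R_{M/N}` the transform of a step function is constant. -/
lemma fhat_eq_sum_moebius (M : ℕ) [NeZero M] (f : ZMod M → ℝ) (hf : IsStepFun M f) (N : ℕ)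
    [NeZero N] (hNM : N ∣ M) (ξ : ZMod M) (hξ : Nat.gcd ξ.val M = M / N) :
    fhat M f ξ = ∑ d ∈ N.divisors,
      (fN M f N ((N / d : ℕ) : ZMod N) : ℂ) * (ArithmeticFunction.moebius d : ℂ) := by
  have hN : N ≠ 0 := NeZero.ne N
  obtain ⟨ζ, hζ, h⟩ := fhat_eq_sum_fN M f N hNM ξ hξ
  rw [h, ← Finset.sum_fiberwise_of_maps_to (t := N.divisors)
    (g := fun w : ZMod N => N / Nat.gcd w.val N)
    (fun w _ => Nat.mem_divisors.2 ⟨Nat.div_dvd_of_dvd (Nat.gcd_dvd_right _ _), hN⟩)]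
  refine Finset.sum_congr rfl fun d hd => ?_
  have hd' := Nat.dvd_of_mem_divisors hd
  rw [← sum_pow_stepClass N ζ hζ d hd', Finset.mul_sum]
  have hset : ∀ w : ZMod N, N / Nat.gcd w.val N = d ↔ Nat.gcd w.val N = N / d := by
    intro w
    constructor
    · rintro rfl
      rw [Nat.div_div_self (Nat.gcd_dvd_right _ _) hN]
    · intro h
      rw [h, Nat.div_div_self hd' hN]
  refine Finset.sum_congr (Finset.filter_congr fun w _ => hset w) fun w hw => ?_
  rw [fN_eq_gcd M f hf N hNM w, (Finset.mem_filter.1 hw).2]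

/-- When `N` has exactly the prime factors `p` and `q`, a sum over the divisors of `N` weighted
by `μ` reduces to the squarefree divisors `1, p, q, pq`. -/
lemma sum_moebius_two_primes (p q k N : ℕ) (hp : p.Prime) (hq : q.Prime) (hpq : p ≠ q)
    (hN : N ≠ 0) (hNk : N ∣ (p * q) ^ k) (hpqN : p * q ∣ N) (h : ℕ → ℂ) :
    ∑ d ∈ N.divisors, h d * (ArithmeticFunction.moebius d : ℂ)
      = h 1 - h p - h q + h (p * q) := by
  have hcop : Nat.Coprime p q := (Nat.coprime_primes hp hq).2 hpq
  have hsub : (p * q).divisors ⊆ N.divisors := Nat.divisors_subset_of_dvd hN hpqN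
  have hpq0 : p * q ≠ 0 := mul_ne_zero hp.ne_zero hq.ne_zero
  rw [← Finset.sum_subset hsub]
  · have hmu : ArithmeticFunction.moebius (p * q) = 1 := by
      rw [ArithmeticFunction.isMultiplicative_moebius.map_mul_of_coprime hcop,
        ArithmeticFunction.moebius_apply_prime hp, ArithmeticFunction.moebius_apply_prime hq]
      norm_num
    have hdiv : (p * q).divisors = {1, p, q, p * q} := by
      ext d
      simp only [Nat.mem_divisors, Finset.mem_insert, Finset.mem_singleton]
      constructor
      · rintro ⟨hd, -⟩
        obtain ⟨a, b, ha, hb, rfl⟩ := (Nat.dvd_mul).1 hd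
        rcases (Nat.dvd_prime hp).1 ha with rfl | rfl <;>
          rcases (Nat.dvd_prime hq).1 hb with rfl | rfl <;> simp
      · rintro (rfl | rfl | rfl | rfl) <;> simp [hp.ne_zero, hq.ne_zero]
    have h1 := hp.one_lt
    have h2 := hq.one_lt
    have h3 : p < p * q := lt_mul_of_one_lt_right hp.pos h2
    have h4 : q < p * q := lt_mul_of_one_lt_left hq.pos h1
    rw [hdiv, Finset.sum_insert, Finset.sum_insert, Finset.sum_insert, Finset.sum_singleton, hmu,
      ArithmeticFunction.moebius_apply_prime hp, ArithmeticFunction.moebius_apply_prime hq,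
      ArithmeticFunction.moebius_apply_one]
    · push_cast
      ring
    all_goals simp only [Finset.mem_insert, Finset.mem_singleton]; omega
  · intro d hd hd'
    have hnsq : ¬ Squarefree d := by
      intro hs
      refine hd' (Nat.mem_divisors.2 ⟨?_, hpq0⟩)
      have hdk : d ∣ (p * q) ^ k := (Nat.dvd_of_mem_divisors hd).trans hNk
      have hk0 : k ≠ 0 := by
        rintro rfl
        have h1 : p * q ∣ 1 := by simpa using hpqN.trans hNk
        exact hp.one_lt.ne' (Nat.dvd_one.1 ((dvd_mul_right p q).trans h1))
      exact (hs.dvd_pow_iff_dvd hk0).1 hdk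
    simp [ArithmeticFunction.moebius_eq_zero_of_not_squarefree hnsq]

/-- For `M = p^n q^m`, a step function `f` on `ℤ_M`, and `N | M` with
`pq | N`: `Φ_N` divides the mask polynomial of `f` iff
`f_N(0) − f_N(N/p) − f_N(N/q) + f_N(N/(pq)) = 0`. -/
theorem statement18 (p q n m : ℕ) (hp : p.Prime) (hq : q.Prime) (hpq : p ≠ q)
    (hn : 1 ≤ n) (hm : 1 ≤ m) (M : ℕ) [NeZero M] (hM : M = p ^ n * q ^ m)
    (f : ZMod M → ℝ) (hf : IsStepFun M f)
    (N : ℕ) (hNM : N ∣ M) (hpqN : p * q ∣ N) :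
    (∀ ξ : ZMod M, Nat.gcd ξ.val M = M / N → fhat M f ξ = 0) ↔
      fN M f N 0 - fN M f N ((N / p : ℕ) : ZMod N) - fN M f N ((N / q : ℕ) : ZMod N)
        + fN M f N ((N / (p * q) : ℕ) : ZMod N) = 0 := by
  have hM0 : M ≠ 0 := NeZero.ne M
  have hN0 : N ≠ 0 := ne_zero_of_dvd_ne_zero hM0 hNM
  have : NeZero N := ⟨hN0⟩
  have hNk : N ∣ (p * q) ^ (n + m) := by
    refine hNM.trans ?_
    rw [hM, mul_pow]
    exact mul_dvd_mul (pow_dvd_pow p (Nat.le_add_right n m)) (pow_dvd_pow q (Nat.le_add_left m n))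
  have key : ∀ ξ : ZMod M, Nat.gcd ξ.val M = M / N → fhat M f ξ =
      ((fN M f N 0 - fN M f N ((N / p : ℕ) : ZMod N) - fN M f N ((N / q : ℕ) : ZMod N)
        + fN M f N ((N / (p * q) : ℕ) : ZMod N) : ℝ) : ℂ) := by
    intro ξ hξ
    rw [fhat_eq_sum_moebius M f hf N hNM ξ hξ,
      sum_moebius_two_primes p q (n + m) N hp hq hpq hN0 hNk hpqN
        (fun d => (fN M f N ((N / d : ℕ) : ZMod N) : ℂ))]
    simp
  constructor
  · intro h
    -- `M / N` itself is a representative of the step class; it is `< M` because `N > 1`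
    have hN1 : 1 < N := lt_of_lt_of_le
      (lt_of_lt_of_le hp.one_lt (Nat.le_mul_of_pos_right p hq.pos))
      (Nat.le_of_dvd (Nat.pos_of_ne_zero hN0) hpqN)
    have hlt : M / N < M := Nat.div_lt_self (Nat.pos_of_ne_zero hM0) hN1
    have hξ : Nat.gcd ((M / N : ℕ) : ZMod M).val M = M / N := by
      rw [ZMod.val_cast_of_lt hlt, Nat.gcd_eq_left (Nat.div_dvd_of_dvd hNM)]
    have h0 := h _ hξ
    rw [key _ hξ] at h0
    exact_mod_cast h0
  · intro h ξ hξ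
    rw [key ξ hξ, h, Complex.ofReal_zero]
end
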